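/- arXiv:1902.10642 — 2 statements merged into one kernel-verified Lean document; each statement's English description precedes it below -/
import Mathlib

section
/- Let M ⊆ ℝⁿ be a proper (i.e., closed in ℝⁿ) m-dimensional real-analytic submanifold. Let v₁, …, v_k : ℝⁿ → ℝⁿ be C^∞ maps, and for x ∈ M let γ_x : ℝ → ℝⁿ be the class-k curve γ_x(t) = x + t·v₁(x) + t²·v₂(x) + ⋯ + t^k·v_k(x). Assume that for every x ∈ M the curve γ_x has contact of order k(m+1) with M at t = 0. Then γ_x(t) ∈ M for every x ∈ M and every t ∈ ℝ. -/
/-- `M ⊆ ℝⁿ` is an `m`-dimensional real-analytic submanifold: around every point of `M`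
there is an open set `U` and a real-analytic map `f : U → ℝ^(n-m)` with surjective
derivative at every point of `U` such that `M ∩ U = {x ∈ U | f x = 0}`. -/
def IsAnalyticSubmanifold {n : ℕ} (m : ℕ) (M : Set (EuclideanSpace ℝ (Fin n))) : Prop :=
  ∀ p ∈ M, ∃ U : Set (EuclideanSpace ℝ (Fin n)), IsOpen U ∧ p ∈ U ∧
    ∃ f : EuclideanSpace ℝ (Fin n) → EuclideanSpace ℝ (Fin (n - m)),
      AnalyticOnNhd ℝ f U ∧ (∀ x ∈ U, Function.Surjective (fderiv ℝ f x)) ∧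
      M ∩ U = {x ∈ U | f x = 0}

/-- A curve `γ : ℝ → ℝⁿ` has contact of order `k` with `M ⊆ ℝⁿ` at `t = 0`: there is a
smooth curve `δ` with values in `M` whose derivatives at `0` up to order `k` agree with
those of `γ`. -/
def HasContactOrderAt {n : ℕ} (k : ℕ) (γ : ℝ → EuclideanSpace ℝ (Fin n))
    (M : Set (EuclideanSpace ℝ (Fin n))) : Prop :=
  ∃ δ : ℝ → EuclideanSpace ℝ (Fin n), ContDiff ℝ (⊤ : ℕ∞) δ ∧ (∀ t, δ t ∈ M) ∧
    ∀ j ≤ k, iteratedDeriv j γ 0 = iteratedDeriv j δ 0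

/-!
Near a point of `M` write `M = {f = 0}`, parametrize it by `φ : ℝᵐ → M`, and let
`Γ(z, t) = γ_{φ z}(t)`. Contact of order `k(m+1)` says that `f ∘ Γ = O(t^(k(m+1)+1))`, so `f'(Γ)`
maps the `m` fields `∂_zΓ`, and also `∂ₜΓ`, to `O(t^(k(m+1)))`. The Cramer residual of `∂ₜΓ` against
`∂_zΓ`, taken in `m` coordinates that complement `ker f'`, is therefore itself `O(t^(k(m+1)))`. But
it is a polynomial in `t` of degree at most `km + (k - 1) < k(m+1)`, hence zero: `∂ₜΓ` is a
combination of the fields `∂_zΓ`. Thus `f ∘ Γ` solves a linear transport equation with zero initial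
data, so it vanishes to infinite order at `t = 0`, and, being analytic in `t`, vanishes near `0`.
The identity theorem and the closedness of `M` propagate this to all `t`.
-/

open Filter Topology Asymptotics
open scoped Polynomial ContDiff

section PolynomialCurves

variable {V : Type*} [AddCommGroup V] [Module ℝ V] {W : Type*} [AddCommGroup W] [Module ℝ W]
  {d e : ℕ}

/-- The curves of class `d` in `V`: those whose coordinates are polynomials of degree at most `d`.
All linear functionals serve as coordinates, so that no basis has to be chosen. -/
def polynomialCurve (V : Type*) [AddCommGroup V] [Module ℝ V] (d : ℕ) : Submodule ℝ (ℝ → V) where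
  carrier := {g | ∀ ℓ : Module.Dual ℝ V, ∃ p : ℝ[X], p.natDegree ≤ d ∧ ∀ t, ℓ (g t) = p.eval t}
  zero_mem' _ := ⟨0, by simp, by simp⟩
  add_mem' hg hh ℓ := by
    obtain ⟨p, hp, hpe⟩ := hg ℓ
    obtain ⟨q, hq, hqe⟩ := hh ℓ
    exact ⟨p + q, Polynomial.natDegree_add_le_of_degree_le hp hq, fun t => by simp [hpe, hqe]⟩
  smul_mem' a g hg ℓ := by
    obtain ⟨p, hp, hpe⟩ := hg ℓ
    exact ⟨a • p, (Polynomial.natDegree_smul_le a p).trans hp, fun t => by simp [hpe]⟩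

theorem mem_polynomialCurve_real {g : ℝ → ℝ} :
    g ∈ polynomialCurve ℝ d ↔ ∃ p : ℝ[X], p.natDegree ≤ d ∧ ∀ t, g t = p.eval t := by
  refine ⟨fun hg => hg LinearMap.id, fun ⟨p, hp, hpe⟩ ℓ => ⟨ℓ 1 • p, ?_, fun t => ?_⟩⟩
  · exact (Polynomial.natDegree_smul_le _ p).trans hp
  · rw [← mul_one (g t), ← smul_eq_mul, map_smul, hpe, Polynomial.eval_smul, smul_eq_mul,
      smul_eq_mul, mul_comm]

theorem polynomialCurve_mono (h : d ≤ e) : polynomialCurve V d ≤ polynomialCurve V e :=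
  fun _ hg ℓ => (hg ℓ).imp fun _ hp => ⟨hp.1.trans h, hp.2⟩

theorem pow_smul_mem_polynomialCurve (i : ℕ) (a : V) :
    (fun t : ℝ => t ^ i • a) ∈ polynomialCurve V i :=
  fun ℓ => ⟨ℓ a • Polynomial.X ^ i,
    (Polynomial.natDegree_smul_le _ _).trans (Polynomial.natDegree_X_pow_le i),
    fun t => by simp [mul_comm]⟩

theorem const_mem_polynomialCurve (a : V) : (fun _ => a) ∈ polynomialCurve V d :=
  polynomialCurve_mono d.zero_le (by simpa using pow_smul_mem_polynomialCurve 0 a)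

theorem map_mem_polynomialCurve (L : V →ₗ[ℝ] W) {g : ℝ → V} (hg : g ∈ polynomialCurve V d) :
    (fun t => L (g t)) ∈ polynomialCurve W d :=
  fun ℓ => hg (ℓ ∘ₗ L)

theorem sum_mem_polynomialCurve {ι : Type*} {s : Finset ι} {g : ι → ℝ → V}
    (hg : ∀ i ∈ s, g i ∈ polynomialCurve V d) :
    (fun t => ∑ i ∈ s, g i t) ∈ polynomialCurve V d := by
  simpa only [Finset.sum_fn] using Submodule.sum_mem _ hg

theorem smul_mem_polynomialCurve {f : ℝ → ℝ} {g : ℝ → V} (hf : f ∈ polynomialCurve ℝ d)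
    (hg : g ∈ polynomialCurve V e) : (fun t => f t • g t) ∈ polynomialCurve V (d + e) := by
  intro ℓ
  obtain ⟨p, hp, hpe⟩ := mem_polynomialCurve_real.1 hf
  obtain ⟨q, hq, hqe⟩ := hg ℓ
  exact ⟨p * q, Polynomial.natDegree_mul_le_of_le hp hq, fun t => by simp [hpe, hqe]⟩

theorem prod_mem_polynomialCurve {ι : Type*} {s : Finset ι} {g : ι → ℝ → ℝ} {d : ι → ℕ}
    (hg : ∀ i ∈ s, g i ∈ polynomialCurve ℝ (d i)) :
    (fun t => ∏ i ∈ s, g i t) ∈ polynomialCurve ℝ (∑ i ∈ s, d i) := by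
  classical
  induction s using Finset.induction_on with
  | empty => simpa using const_mem_polynomialCurve (d := 0) (1 : ℝ)
  | insert a s ha ih =>
    simp only [Finset.sum_insert ha, Finset.prod_insert ha]
    exact smul_mem_polynomialCurve (hg a (Finset.mem_insert_self a s))
      (ih fun i hi => hg i (Finset.mem_insert_of_mem hi))

theorem det_mem_polynomialCurve {ι : Type*} [Fintype ι] [DecidableEq ι] {d : ι → ℕ}
    {B : ℝ → Matrix ι ι ℝ} (hB : ∀ i j, (fun t => B t i j) ∈ polynomialCurve ℝ (d j)) :
    (fun t => (B t).det) ∈ polynomialCurve ℝ (∑ j, d j) := by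
  simp only [Matrix.det_apply]
  exact sum_mem_polynomialCurve fun σ _ =>
    zsmul_mem (prod_mem_polynomialCurve fun j _ => hB (σ j) j) (σ.sign : ℤ)

theorem continuous_of_mem_polynomialCurve {V : Type*} [NormedAddCommGroup V] [NormedSpace ℝ V]
    [FiniteDimensional ℝ V] {g : ℝ → V} (hg : g ∈ polynomialCurve V d) : Continuous g := by
  let φ := (Module.finBasis ℝ V).equivFunL
  refine φ.toHomeomorph.isInducing.continuous_iff.2 (continuous_pi fun i => ?_)
  obtain ⟨p, -, hp⟩ := hg (LinearMap.proj i ∘ₗ φ.toLinearEquiv.toLinearMap)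
  exact (funext hp : _ = fun t => p.eval t) ▸ p.continuous

theorem X_pow_dvd_of_isBigO_pow {p : ℝ[X]} {N : ℕ}
    (h : (fun t => p.eval t) =O[𝓝 0] fun t : ℝ => t ^ N) : Polynomial.X ^ N ∣ p := by
  induction N with
  | zero => simp
  | succ N ih =>
    obtain ⟨q, rfl⟩ := ih (h.trans (isLittleO_pow_pow N.lt_succ_self).isBigO)
    have hq : (fun t => q.eval t) =O[𝓝[≠] 0] fun t : ℝ => t := by
      refine ((isBigO_refl (fun t : ℝ => (t ^ N)⁻¹) _).mul (h.mono nhdsWithin_le_nhds)).congr' ?_ ?_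
      all_goals
        filter_upwards [self_mem_nhdsWithin] with t (ht : t ≠ 0)
        simp [pow_succ, ht]
    have hq0 : q.eval 0 = 0 := tendsto_nhds_unique
      (q.continuous.continuousAt.mono_left nhdsWithin_le_nhds)
      (hq.trans_tendsto (tendsto_nhdsWithin_of_tendsto_nhds tendsto_id))
    rw [pow_succ]
    exact mul_dvd_mul_left _
      (Polynomial.X_dvd_iff.2 (by rwa [Polynomial.coeff_zero_eq_eval_zero]))

theorem eq_zero_of_mem_polynomialCurve_of_isBigO_pow {V : Type*} [NormedAddCommGroup V]
    [NormedSpace ℝ V] [FiniteDimensional ℝ V] {N : ℕ} {g : ℝ → V}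
    (hg : g ∈ polynomialCurve V d) (hd : d < N) (h : g =O[𝓝 0] fun t : ℝ => t ^ N) : g = 0 := by
  ext1 t
  rw [Pi.zero_apply, ← Module.forall_dual_apply_eq_zero_iff ℝ]
  intro ℓ
  obtain ⟨p, hp, hpe⟩ := hg ℓ
  have hO : (fun t => p.eval t) =O[𝓝 0] fun t : ℝ => t ^ N := by
    simp only [← hpe]
    exact (ℓ.toContinuousLinearMap.isBigO_comp g _).trans h
  rw [hpe, Polynomial.eq_zero_of_dvd_of_natDegree_lt (X_pow_dvd_of_isBigO_pow hO)
    (by simpa using hp.trans_lt hd), Polynomial.eval_zero]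

end PolynomialCurves

section CramerResidual

variable {R V ι : Type*}

/-- The square matrix whose columns are the `P`-coordinates of the vectors `W j`. -/
def coordinateMatrix [CommRing R] [AddCommGroup V] [Module R V] (P : V →ₗ[R] ι → R) (W : ι → V) :
    Matrix ι ι R :=
  Matrix.of fun l j => P (W j) l

theorem coordinateMatrix_eq_one [CommRing R] [AddCommGroup V] [Module R V] [DecidableEq ι]
    {P : V →ₗ[R] ι → R} {L : (ι → R) →ₗ[R] V} (h : P ∘ₗ L = .id) :
    coordinateMatrix P (fun j => L (Pi.single j 1)) = 1 := by
  ext l j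
  have := congr_fun (DFunLike.congr_fun h (Pi.single j 1)) l
  simpa [coordinateMatrix, Matrix.one_apply, Pi.single_apply] using this

theorem continuousAt_coordinateMatrix {X : Type*} [TopologicalSpace X] [NormedAddCommGroup V]
    [NormedSpace ℝ V] (P : V →L[ℝ] ι → ℝ) {W : ι → X → V} {x : X}
    (hW : ∀ j, ContinuousAt (W j) x) :
    ContinuousAt (fun y => coordinateMatrix (P : V →ₗ[ℝ] ι → ℝ) (W · y)) x :=
  continuousAt_pi.2 fun l => continuousAt_pi.2 fun j =>
    ((continuous_apply l).comp P.continuous).continuousAt.comp (hW j)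

variable [Fintype ι] [DecidableEq ι]

/-- The difference of the two sides of Cramer's rule `det B • c = ∑ j, det Bⱼ • W j`, where `B` is
`coordinateMatrix P W` and `Bⱼ` is `B` with its `j`-th column replaced by `P c`. It measures how far
`c` is from being a combination of the `W j`, without any division. -/
def cramerResidual [CommRing R] [AddCommGroup V] [Module R V] (P : V →ₗ[R] ι → R) (W : ι → V)
    (c : V) : V :=
  (coordinateMatrix P W).det • c - ∑ j, (coordinateMatrix P W).cramer (P c) j • W j

theorem map_cramerResidual_eq_zero [CommRing R] [AddCommGroup V] [Module R V]
    (P : V →ₗ[R] ι → R) (W : ι → V) (c : V) : P (cramerResidual P W c) = 0 := by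
  rw [cramerResidual, map_sub, map_smul, map_sum, ← Matrix.mulVec_cramer, sub_eq_zero]
  ext l
  simp [Matrix.mulVec, dotProduct, coordinateMatrix, mul_comm]

theorem sum_cramer_smul_eq_of_cramerResidual_eq_zero [Field R] [AddCommGroup V] [Module R V]
    {P : V →ₗ[R] ι → R} {W : ι → V} {c : V} (h : cramerResidual P W c = 0)
    (hdet : (coordinateMatrix P W).det ≠ 0) :
    ∑ j, ((coordinateMatrix P W).det⁻¹ • (coordinateMatrix P W).cramer (P c)) j • W j = c := by
  simp only [Pi.smul_apply, smul_assoc, ← Finset.smul_sum]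
  rw [← sub_eq_zero.1 h, inv_smul_smul₀ hdet]

theorem cramerResidual_mem_polynomialCurve [AddCommGroup V] [Module ℝ V] (P : V →ₗ[ℝ] ι → ℝ)
    {W : ι → ℝ → V} {c : ℝ → V} {d : ι → ℕ} {e : ℕ} (hW : ∀ j, W j ∈ polynomialCurve V (d j))
    (hc : c ∈ polynomialCurve V e) :
    (fun t => cramerResidual P (W · t) (c t)) ∈ polynomialCurve V (∑ j, d j + e) := by
  have hcoord {g : ℝ → V} {b : ℕ} (hg : g ∈ polynomialCurve V b) (l : ι) :
      (fun t => P (g t) l) ∈ polynomialCurve ℝ b :=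
    map_mem_polynomialCurve (LinearMap.proj l ∘ₗ P) hg
  refine Submodule.sub_mem _
    (smul_mem_polynomialCurve (det_mem_polynomialCurve fun l j => hcoord (hW j) l) hc)
    (sum_mem_polynomialCurve fun j _ => ?_)
  have hcramer : (fun t => (coordinateMatrix P (W · t)).cramer (P (c t)) j) ∈
      polynomialCurve ℝ (∑ l, Function.update d j e l) := by
    simp only [Matrix.cramer_apply]
    refine det_mem_polynomialCurve fun i l => ?_
    obtain rfl | hl := eq_or_ne l j
    · simpa using hcoord hc i
    · simpa [hl, coordinateMatrix] using hcoord (hW l) i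
  have hdeg : ∑ l, Function.update d j e l + d j = ∑ l, d l + e := by
    rw [Finset.sum_update_of_mem (Finset.mem_univ j), Finset.sdiff_singleton_eq_erase,
      ← Finset.add_sum_erase _ d (Finset.mem_univ j)]
    ring
  exact hdeg ▸ smul_mem_polynomialCurve hcramer (hW j)

theorem continuousAt_cramer_coordinateMatrix {X : Type*} [TopologicalSpace X]
    [NormedAddCommGroup V] [NormedSpace ℝ V] (P : V →L[ℝ] ι → ℝ) {W : ι → X → V} {c : X → V} {x : X}
    (hW : ∀ j, ContinuousAt (W j) x) (hc : ContinuousAt c x) :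
    ContinuousAt (fun y => (coordinateMatrix (P : V →ₗ[ℝ] ι → ℝ) (W · y)).cramer (P (c y))) x := by
  have hcramer : Continuous fun q : Matrix ι ι ℝ × (ι → ℝ) => q.1.cramer q.2 :=
    continuous_fst.matrix_cramer continuous_snd
  exact hcramer.continuousAt.comp (f := fun y => (coordinateMatrix _ (W · y), P (c y)))
    ((continuousAt_coordinateMatrix P hW).prodMk (P.continuous.continuousAt.comp hc))

theorem exists_continuousAt_sum_smul_eq {X : Type*} [TopologicalSpace X] [NormedAddCommGroup V]
    [NormedSpace ℝ V] (P : V →L[ℝ] ι → ℝ) {W : ι → X → V} {c : X → V} {x : X}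
    (hW : ∀ j, ContinuousAt (W j) x) (hc : ContinuousAt c x)
    (hdet : (coordinateMatrix (P : V →ₗ[ℝ] ι → ℝ) (W · x)).det ≠ 0)
    (h : ∀ᶠ y in 𝓝 x, cramerResidual (P : V →ₗ[ℝ] ι → ℝ) (W · y) (c y) = 0) :
    ∃ a : X → ι → ℝ, ContinuousAt a x ∧ ∀ᶠ y in 𝓝 x, ∑ j, a y j • W j y = c y := by
  have hdetc : ContinuousAt (fun y => (coordinateMatrix (P : V →ₗ[ℝ] ι → ℝ) (W · y)).det) x :=
    continuous_id.matrix_det.continuousAt.comp (continuousAt_coordinateMatrix P hW)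
  refine ⟨_, (hdetc.inv₀ hdet).smul (continuousAt_cramer_coordinateMatrix P hW hc), ?_⟩
  filter_upwards [h, hdetc.eventually_ne hdet] with y hy hdety
  exact sum_cramer_smul_eq_of_cramerResidual_eq_zero hy hdety

end CramerResidual

section UniformInjectivity

theorem isBigO_apply_of_tendsto_of_injective {𝕜 V G α : Type*} [NontriviallyNormedField 𝕜]
    [CompleteSpace 𝕜] [NormedAddCommGroup V] [NormedSpace 𝕜 V] [FiniteDimensional 𝕜 V]
    [NormedAddCommGroup G] [NormedSpace 𝕜 G] {l : Filter α} {A : α → V →L[𝕜] G} {A₀ : V →L[𝕜] G}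
    (hA : Tendsto A l (𝓝 A₀)) (hA₀ : Function.Injective A₀) (q : α → V) :
    q =O[l] fun a => A a (q a) := by
  obtain ⟨K, -, hK⟩ := (A₀ : V →ₗ[𝕜] G).injective_iff_antilipschitz.1 hA₀
  have hq : q =O[l] fun a => A₀ (q a) :=
    .of_bound K (.of_forall fun a => ZeroHomClass.bound_of_antilipschitz A₀ hK (q a))
  have hsub : (fun a => (A₀ - A a) (q a)) =o[l] fun a => A₀ (q a) := by
    refine IsLittleO.trans_isBigO (isLittleO_iff.2 fun ε hε => ?_) hq
    filter_upwards [Metric.tendsto_nhds.1 hA ε hε] with a ha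
    rw [dist_comm, dist_eq_norm] at ha
    exact (A₀ - A a).le_of_opNorm_le ha.le (q a)
  simpa using hq.trans hsub.right_isBigO_sub

theorem cramerResidual_eq_zero_of_isBigO_pow {V G ι : Type*} [NormedAddCommGroup V]
    [NormedSpace ℝ V] [FiniteDimensional ℝ V] [NormedAddCommGroup G] [NormedSpace ℝ G] [Fintype ι]
    [DecidableEq ι] {P : V →L[ℝ] ι → ℝ} {A : ℝ → V →L[ℝ] G} (hA : ContinuousAt A 0)
    (hinj : Function.Injective ((A 0).prod P)) {W : ι → ℝ → V} {c : ℝ → V} {d : ι → ℕ} {e N : ℕ}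
    (hW : ∀ j, W j ∈ polynomialCurve V (d j)) (hc : c ∈ polynomialCurve V e)
    (hN : ∑ j, d j + e < N) (hAW : ∀ j, (fun t => A t (W j t)) =O[𝓝 0] fun t : ℝ => t ^ N)
    (hAc : (fun t => A t (c t)) =O[𝓝 0] fun t : ℝ => t ^ N) (t : ℝ) :
    cramerResidual (P : V →ₗ[ℝ] ι → ℝ) (W · t) (c t) = 0 := by
  set r : ℝ → V := fun t => cramerResidual (P : V →ₗ[ℝ] ι → ℝ) (W · t) (c t)
  suffices hr : r =O[𝓝 0] fun t : ℝ => t ^ N from congr_fun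
    (eq_zero_of_mem_polynomialCurve_of_isBigO_pow (cramerResidual_mem_polynomialCurve _ hW hc)
      hN hr) t
  have hWc (j : ι) : ContinuousAt (W j) 0 :=
    (continuous_of_mem_polynomialCurve (hW j)).continuousAt
  have hcc : ContinuousAt c 0 := (continuous_of_mem_polynomialCurve hc).continuousAt
  have hdet := continuous_id.matrix_det.continuousAt.comp (continuousAt_coordinateMatrix P hWc)
  have hcramer := continuousAt_pi.1 (continuousAt_cramer_coordinateMatrix P hWc hcc)
  have hsmul {b : ℝ → ℝ} (hb : ContinuousAt b 0) {g : ℝ → G} (hg : g =O[𝓝 0] fun t : ℝ => t ^ N) :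
      (fun t => b t • g t) =O[𝓝 0] fun t : ℝ => t ^ N := by
    simpa using (hb.isBigO_one ℝ).smul hg
  have hAr : (fun t => A t (r t)) =O[𝓝 0] fun t : ℝ => t ^ N := by
    simp only [r, cramerResidual, map_sub, map_sum, map_smul]
    exact (hsmul hdet hAc).sub (IsBigO.fun_sum fun j _ => hsmul (hcramer j) (hAW j))
  have hPr (t : ℝ) : P (r t) = 0 := map_cramerResidual_eq_zero (P : V →ₗ[ℝ] ι → ℝ) _ _
  have hAP : Tendsto (fun t => (A t).prod P) (𝓝 0) (𝓝 ((A 0).prod P)) :=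
    ((ContinuousLinearMap.prodₗᵢ ℝ (𝕜 := ℝ)).continuous.tendsto _).comp
      (hA.prodMk_nhds tendsto_const_nhds)
  refine (isBigO_apply_of_tendsto_of_injective hAP hinj r).trans (hAr.prod_left ?_)
  simpa only [ContinuousLinearMap.coe_coe, hPr] using isBigO_zero _ _

end UniformInjectivity

section OrderOfVanishing

variable {Z G : Type*} [NormedAddCommGroup Z] [NormedSpace ℝ Z] [NormedAddCommGroup G]
  [NormedSpace ℝ G] {F : Z × ℝ → G} {z : Z} {t : ℝ} {N : ℕ}

theorem isLittleO_sub_pow_smul_iteratedDeriv {g : ℝ → G} (hg : ContDiffAt ℝ N g t)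
    (h : ∀ j < N, iteratedDeriv j g t = 0) :
    (fun s => g s - (s - t) ^ N • ((N.factorial : ℝ)⁻¹ • iteratedDeriv N g t)) =o[𝓝 t]
      fun s => (s - t) ^ N := by
  obtain ⟨u, hu, hgu⟩ := hg.contDiffOn le_rfl (by simp)
  obtain ⟨ε, hε, hball⟩ := Metric.mem_nhds_iff.1 hu
  have htaylor := taylor_isLittleO (convex_ball t ε) (Metric.mem_ball_self hε) (hgu.mono hball)
  rw [Metric.isOpen_ball.nhdsWithin_eq (Metric.mem_ball_self hε)] at htaylor
  have hjet (j : ℕ) : iteratedDerivWithin j g (Metric.ball t ε) t = iteratedDeriv j g t :=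
    iteratedDerivWithin_of_isOpen Metric.isOpen_ball (Metric.mem_ball_self hε)
  refine htaylor.congr_left fun s => ?_
  rw [taylor_within_apply, Finset.sum_range_succ, Finset.sum_eq_zero, zero_add, hjet, mul_comm,
    mul_smul]
  intro j hj
  rw [hjet, h j (Finset.mem_range.1 hj), smul_zero]

theorem isBigO_pow_of_iteratedDeriv_eq_zero {g : ℝ → G} (hg : ContDiffAt ℝ N g t)
    (h : ∀ j < N, iteratedDeriv j g t = 0) : g =O[𝓝 t] fun s => (s - t) ^ N := by
  have hmonomial : (fun s => (s - t) ^ N • ((N.factorial : ℝ)⁻¹ • iteratedDeriv N g t)) =O[𝓝 t]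
      fun s => (s - t) ^ N := by
    simpa using (isBigO_refl (fun s => (s - t) ^ N) (𝓝 t)).smul
      (isBigO_const_const ((N.factorial : ℝ)⁻¹ • iteratedDeriv N g t) (one_ne_zero (α := ℝ)) (𝓝 t))
  simpa using (isLittleO_sub_pow_smul_iteratedDeriv hg h).isBigO.add hmonomial

theorem eq_zero_of_pow_smul_isLittleO {a : G}
    (h : (fun s => (s - t) ^ N • a) =o[𝓝 t] fun s => (s - t) ^ N) : a = 0 := by
  have ha : (fun _ : ℝ => a) =o[𝓝[≠] t] fun _ => (1 : ℝ) := by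
    refine ((isBigO_refl (fun s => ((s - t) ^ N)⁻¹) _).smul_isLittleO
      (h.mono nhdsWithin_le_nhds)).congr' ?_ ?_
    all_goals
      filter_upwards [self_mem_nhdsWithin] with s (hs : s ≠ t)
      simp [sub_ne_zero.2 hs]
  exact isLittleO_const_const_iff.1 ha

theorem iteratedDeriv_eq_zero_of_isBigO_pow {g : ℝ → G} (hg : ContDiffAt ℝ N g t)
    (h : g =O[𝓝 t] fun s => (s - t) ^ N) : ∀ j < N, iteratedDeriv j g t = 0 := by
  induction N with
  | zero => simp
  | succ N ih =>
    have hlt : (fun s => (s - t) ^ (N + 1)) =o[𝓝 t] fun s => (s - t) ^ N :=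
      (isLittleO_pow_pow N.lt_succ_self).comp_tendsto
        (tendsto_sub_nhds_zero_iff.2 tendsto_id)
    have hgN : ContDiffAt ℝ N g t := hg.of_le (by simp)
    have hj := ih hgN (h.trans hlt.isBigO)
    have hmonomial := (h.trans_isLittleO hlt).sub (isLittleO_sub_pow_smul_iteratedDeriv hgN hj)
    simp only [sub_sub_cancel] at hmonomial
    have hN : iteratedDeriv N g t = 0 := by
      simpa [N.factorial_ne_zero] using eq_zero_of_pow_smul_isLittleO hmonomial
    exact Nat.forall_lt_succ_right.2 ⟨hj, hN⟩

theorem hasDerivAt_slice (hF : DifferentiableAt ℝ F (z, t)) :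
    HasDerivAt (fun s => F (z, s)) (fderiv ℝ F (z, t) (0, 1)) t :=
  hF.hasFDerivAt.comp_hasDerivAt t ((hasDerivAt_const t z).prodMk (hasDerivAt_id t))

theorem hasFDerivAt_slice (hF : DifferentiableAt ℝ F (z, t)) :
    HasFDerivAt (fun y => F (y, t)) (fderiv ℝ F (z, t) ∘L .inl ℝ Z ℝ) z :=
  hF.hasFDerivAt.comp z (hasFDerivAt_prodMk_left z t)

theorem fderiv_comp_slice_eventuallyEq {E : Type*} [NormedAddCommGroup E] [NormedSpace ℝ E]
    {f : E → G} {Γ : Z × ℝ → E} (hf : ContDiffAt ℝ 1 f (Γ (z, t))) (hΓ : ContDiffAt ℝ 1 Γ (z, t)) :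
    (fun s => fderiv ℝ (f ∘ Γ) (z, s)) =ᶠ[𝓝 t]
      fun s => fderiv ℝ f (Γ (z, s)) ∘L fderiv ℝ Γ (z, s) := by
  have hpair : ContinuousAt (fun s => (z, s)) t := by fun_prop
  filter_upwards [hpair.eventually (hΓ.continuousAt.eventually (hf.eventually (by simp))),
    hpair.eventually (hΓ.eventually (by simp))] with s hfs hΓs
  exact fderiv_comp (z, s) (hfs.differentiableAt one_ne_zero) (hΓs.differentiableAt one_ne_zero)

theorem contDiffAt_fderiv_apply {E : Type*} [NormedAddCommGroup E] [NormedSpace ℝ E] {f : E → G}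
    {x : E} (hf : ContDiffAt ℝ ∞ f x) (w : E) : ContDiffAt ℝ ∞ (fun y => fderiv ℝ f y w) x :=
  (hf.fderiv_right le_rfl).clm_apply contDiffAt_const

theorem fderiv_fderiv_apply_comm {E : Type*} [NormedAddCommGroup E] [NormedSpace ℝ E] {f : E → G}
    {x : E} (hf : ContDiffAt ℝ 2 f x) (v w : E) :
    fderiv ℝ (fun y => fderiv ℝ f y v) x w = fderiv ℝ (fun y => fderiv ℝ f y w) x v := by
  have hd : DifferentiableAt ℝ (fderiv ℝ f) x :=
    (hf.fderiv_right (m := 1) le_rfl).differentiableAt one_ne_zero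
  rw [fderiv_clm_apply hd (by fun_prop), fderiv_clm_apply hd (by fun_prop)]
  simpa using (hf.isSymmSndFDerivAt (by simp)) w v

theorem iteratedDeriv_succ_slice_eventuallyEq (hF : ContDiffAt ℝ 1 F (z, t)) (j : ℕ) :
    (fun y => iteratedDeriv (j + 1) (fun s => F (y, s)) t) =ᶠ[𝓝 z]
      fun y => iteratedDeriv j (fun s => fderiv ℝ F (y, s) (0, 1)) t := by
  filter_upwards [(hF.eventually (by simp)).curry_nhds] with y hy
  rw [iteratedDeriv_succ']
  refine EventuallyEq.iteratedDeriv_eq j ?_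
  filter_upwards [hy] with s hs using (hasDerivAt_slice (hs.differentiableAt one_ne_zero)).deriv

theorem iteratedDeriv_fderiv_slice (hF : ContDiffAt ℝ ∞ F (z, t)) (w : Z) (j : ℕ) :
    iteratedDeriv j (fun s => fderiv ℝ F (z, s) (w, 0)) t =
      fderiv ℝ (fun y => iteratedDeriv j (fun s => F (y, s)) t) z w := by
  induction j generalizing F with
  | zero =>
    simpa using
      (DFunLike.congr_fun (hasFDerivAt_slice (hF.differentiableAt (by simp))).fderiv w).symm
  | succ j ih =>
    have hcomm : (fun s => fderiv ℝ (fun p => fderiv ℝ F p (w, 0)) (z, s) (0, 1)) =ᶠ[𝓝 t]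
        fun s => fderiv ℝ (fun p => fderiv ℝ F p (0, 1)) (z, s) (w, 0) := by
      have hF2 := (contDiffAt_infty.1 hF 2).eventually (by simp)
      filter_upwards [hF2.curry_nhds.self_of_nhds] with s hs using fderiv_fderiv_apply_comm hs _ _
    have hw := contDiffAt_fderiv_apply hF (w, 0)
    rw [(iteratedDeriv_succ_slice_eventuallyEq (contDiffAt_infty.1 hw 1) j).eq_of_nhds,
      hcomm.iteratedDeriv_eq, ih (contDiffAt_fderiv_apply hF (0, 1)),
      (iteratedDeriv_succ_slice_eventuallyEq (contDiffAt_infty.1 hF 1) j).fderiv_eq]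

theorem isBigO_pow_fderiv_fst (hF : ContDiffAt ℝ ∞ F (z, t))
    (h : ∀ᶠ y in 𝓝 z, ∀ j < N, iteratedDeriv j (fun s => F (y, s)) t = 0) (w : Z) :
    (fun s => fderiv ℝ F (z, s) (w, 0)) =O[𝓝 t] fun s => (s - t) ^ N := by
  refine isBigO_pow_of_iteratedDeriv_eq_zero ?_ fun j hj => ?_
  · exact ContDiffAt.comp t (contDiffAt_infty.1 (contDiffAt_fderiv_apply hF (w, 0)) N) (by fun_prop)
  · have h0 : (fun y => iteratedDeriv j (fun s => F (y, s)) t) =ᶠ[𝓝 z] fun _ => 0 :=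
      h.mono fun y hy => hy j hj
    rw [iteratedDeriv_fderiv_slice hF, h0.fderiv_eq]
    simp

theorem isBigO_pow_fderiv_snd (hF : ContDiffAt ℝ ∞ F (z, t))
    (h : ∀ j < N + 1, iteratedDeriv j (fun s => F (z, s)) t = 0) :
    (fun s => fderiv ℝ F (z, s) (0, 1)) =O[𝓝 t] fun s => (s - t) ^ N := by
  refine isBigO_pow_of_iteratedDeriv_eq_zero ?_ fun j hj => ?_
  · exact ContDiffAt.comp t (contDiffAt_infty.1 (contDiffAt_fderiv_apply hF (0, 1)) N) (by fun_prop)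
  · rw [← (iteratedDeriv_succ_slice_eventuallyEq (contDiffAt_infty.1 hF 1) j).eq_of_nhds]
    exact h (j + 1) (by omega)

theorem iteratedDeriv_slice_eq_zero_of_isBigO_pow (hF : ContDiffAt ℝ ∞ F (z, t))
    (h0 : F (z, t) = 0)
    (h : (fun s => fderiv ℝ F (z, s) (0, 1)) =O[𝓝 t] fun s => (s - t) ^ N) :
    ∀ j < N + 1, iteratedDeriv j (fun s => F (z, s)) t = 0 := by
  have hsnd : ContDiffAt ℝ N (fun s => fderiv ℝ F (z, s) (0, 1)) t :=
    ContDiffAt.comp t (contDiffAt_infty.1 (contDiffAt_fderiv_apply hF (0, 1)) N) (by fun_prop)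
  rintro (_ | j) hj
  · simpa using h0
  · rw [(iteratedDeriv_succ_slice_eventuallyEq (contDiffAt_infty.1 hF 1) j).eq_of_nhds]
    exact iteratedDeriv_eq_zero_of_isBigO_pow hsnd h j (by omega)

theorem prodMk_zero_eq_sum_single {R ι : Type*} [Semiring R] [Fintype ι] [DecidableEq ι]
    (a : ι → R) : (a, (0 : R)) = ∑ j, a j • ((Pi.single j 1 : ι → R), (0 : R)) :=
  Prod.ext (by simp [Prod.fst_sum, ← Pi.single_smul, Finset.univ_sum_single])
    (by simp [Prod.snd_sum])

/-- `F` satisfies the transport equation `∂ₜF = ∂_zF · a` along the slice at `z` near `t`, with a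
coefficient field `a` that is continuous at `t`. -/
def TransportEquationAt {ι : Type*} [Fintype ι] (F : (ι → ℝ) × ℝ → G) (z : ι → ℝ) (t : ℝ) : Prop :=
  ∃ a : ℝ → ι → ℝ, ContinuousAt a t ∧
    ∀ᶠ s in 𝓝 t, fderiv ℝ F (z, s) (0, 1) = fderiv ℝ F (z, s) (a s, 0)

theorem TransportEquationAt.isBigO_fderiv_snd {ι : Type*} [Fintype ι] [DecidableEq ι]
    {F : (ι → ℝ) × ℝ → G} {z : ι → ℝ} (h : TransportEquationAt F z t)
    (hfst : ∀ j, (fun s => fderiv ℝ F (z, s) (Pi.single j 1, 0)) =O[𝓝 t] fun s => (s - t) ^ N) :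
    (fun s => fderiv ℝ F (z, s) (0, 1)) =O[𝓝 t] fun s => (s - t) ^ N := by
  obtain ⟨a, ha, hF⟩ := h
  have hsum : ∀ᶠ s in 𝓝 t, fderiv ℝ F (z, s) (0, 1) =
      ∑ j, a s j • fderiv ℝ F (z, s) (Pi.single j 1, 0) := by
    filter_upwards [hF] with s hs
    rw [hs, prodMk_zero_eq_sum_single (a s)]
    simp only [map_sum, map_smul]
  refine (IsBigO.fun_sum fun j _ => ?_).congr' (EventuallyEq.symm hsum) .rfl
  simpa using ((continuousAt_pi.1 ha j).isBigO_one ℝ).smul (hfst j)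

theorem iteratedDeriv_slice_eq_zero_of_transportEquationAt {ι : Type*} [Fintype ι]
    {F : (ι → ℝ) × ℝ → G} {z : ι → ℝ} (hF : ∀ᶠ y in 𝓝 z, ContDiffAt ℝ ∞ F (y, t))
    (h0 : ∀ᶠ y in 𝓝 z, F (y, t) = 0) (htr : ∀ᶠ y in 𝓝 z, TransportEquationAt F y t) (N : ℕ) :
    ∀ᶠ y in 𝓝 z, ∀ j < N, iteratedDeriv j (fun s => F (y, s)) t = 0 := by
  classical
  induction N with
  | zero => simp
  | succ N ih =>
    filter_upwards [hF, h0, htr, eventually_eventually_nhds.2 ih] with y hFy h0y htry ihy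
    exact iteratedDeriv_slice_eq_zero_of_isBigO_pow hFy h0y
      (htry.isBigO_fderiv_snd fun j => isBigO_pow_fderiv_fst hFy ihy _)

theorem eventually_eq_zero_of_iteratedDeriv_eq_zero [CompleteSpace G] {g : ℝ → G}
    (hg : AnalyticAt ℝ g t) (h : ∀ j, iteratedDeriv j g t = 0) : ∀ᶠ s in 𝓝 t, g s = 0 := by
  rw [← analyticOrderAt_eq_top]
  refine ENat.eq_top_iff_forall_ge.2 fun N => ?_
  exact (natCast_le_analyticOrderAt_iff_iteratedDeriv_eq_zero hg).2 fun j _ => h j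

end OrderOfVanishing

section LocalParametrization

variable {E G : Type*} [NormedAddCommGroup E] [NormedSpace ℝ E] [FiniteDimensional ℝ E]
  [NormedAddCommGroup G] [NormedSpace ℝ G] [CompleteSpace G]

theorem exists_continuousLinearMap_isCompl_ker (K : Submodule ℝ E) :
    ∃ P : E →L[ℝ] Fin (Module.finrank ℝ K) → ℝ, P.range = ⊤ ∧ IsCompl K P.ker := by
  obtain ⟨Q, hQ⟩ := Submodule.ClosedComplemented.of_finiteDimensional K
  let e := (Module.finBasis ℝ K).equivFunL
  refine ⟨e.toContinuousLinearMap ∘L Q, ?_, ?_⟩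
  · exact LinearMap.range_eq_top.2
      (e.surjective.comp (LinearMap.range_eq_top.1 (LinearMap.range_eq_of_proj hQ)))
  · have hker : (e.toContinuousLinearMap ∘L Q).ker = Q.ker := by
      ext x
      simp
    exact hker ▸ LinearMap.isCompl_of_proj hQ

theorem exists_contDiffAt_fiber_parametrization {f : E → G} {p : E} {n : ℕ∞ω} (hn : n ≠ 0)
    (hf : ContDiffAt ℝ n f p) (hsurj : Function.Surjective (fderiv ℝ f p)) :
    ∃ (P : E →L[ℝ] Fin (Module.finrank ℝ (fderiv ℝ f p).ker) → ℝ)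
      (φ : (Fin (Module.finrank ℝ (fderiv ℝ f p).ker) → ℝ) → E),
      φ (P p) = p ∧ ContDiffAt ℝ n φ (P p) ∧
      (∀ᶠ z in 𝓝 (P p), f (φ z) = f p ∧ P (φ z) = z) ∧
      Function.Injective ((fderiv ℝ f p).prod P) := by
  have : CompleteSpace E := FiniteDimensional.complete ℝ E
  obtain ⟨P, hrange, hcompl⟩ := exists_continuousLinearMap_isCompl_ker (fderiv ℝ f p).ker
  let D : ImplicitFunctionData ℝ E G (Fin (Module.finrank ℝ (fderiv ℝ f p).ker) → ℝ) :=
    { leftFun := f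
      leftDeriv := fderiv ℝ f p
      rightFun := P
      rightDeriv := P
      pt := p
      hasStrictFDerivAt_leftFun := hf.hasStrictFDerivAt hn
      hasStrictFDerivAt_rightFun := P.hasStrictFDerivAt
      range_leftDeriv := LinearMap.range_eq_top.2 hsurj
      range_rightDeriv := hrange
      isCompl_ker := hcompl }
  have hmap : ContinuousAt (fun z => (f p, z)) (P p) := by fun_prop
  refine ⟨P, D.implicitFunction (f p), D.implicitFunction_apply_image.self_of_nhds, ?_, ?_, ?_⟩
  · exact (D.contDiffAt_implicitFunction hf P.contDiff.contDiffAt hn).comp (P p)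
      (contDiffAt_const.prodMk contDiffAt_id)
  · filter_upwards [hmap.eventually D.prodFun_implicitFunction] with z hz
    exact Prod.ext_iff.1 hz
  · exact LinearMap.ker_eq_bot.1 ((LinearMap.ker_prod _ _).trans hcompl.inf_eq_bot)

end LocalParametrization

section PolynomialFamily

variable {Z V : Type*} [NormedAddCommGroup V] [NormedSpace ℝ V] {k : ℕ} {φ : Z → V}
  {u : Fin k → Z → V} {z : Z} {t : ℝ}

/-- The family of class-`k` curves `t ↦ φ z + t • u₁ z + ⋯ + t ^ k • u_k z` indexed by `z`, as a map
of `(z, t)`. The coefficient `u_{i+1}` is `u i`. -/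
def polynomialFamily (φ : Z → V) (u : Fin k → Z → V) (q : Z × ℝ) : V :=
  φ q.1 + ∑ i : Fin k, q.2 ^ ((i : ℕ) + 1) • u i q.1

theorem polynomialFamily_zero (φ : Z → V) (u : Fin k → Z → V) (z : Z) :
    polynomialFamily φ u (z, 0) = φ z := by
  simp [polynomialFamily]

theorem analyticAt_polynomialFamily_slice (φ : Z → V) (u : Fin k → Z → V) (z : Z) (t : ℝ) :
    AnalyticAt ℝ (fun s => polynomialFamily φ u (z, s)) t :=
  (analyticAt_const (v := φ z)).fun_add (Finset.analyticAt_fun_sum _ fun i _ =>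
    (analyticAt_id.fun_pow (i + 1)).fun_smul (analyticAt_const (v := u i z)))

theorem polynomialFamily_mem_polynomialCurve (φ : Z → V) (u : Fin k → Z → V) (z : Z) :
    (fun t => polynomialFamily φ u (z, t)) ∈ polynomialCurve V k :=
  Submodule.add_mem _ (const_mem_polynomialCurve (φ z)) (sum_mem_polynomialCurve fun i _ =>
    polynomialCurve_mono i.isLt (pow_smul_mem_polynomialCurve (i + 1) (u i z)))

variable [NormedAddCommGroup Z] [NormedSpace ℝ Z]

theorem contDiffAt_polynomialFamily {n : ℕ∞ω} (hφ : ContDiffAt ℝ n φ z)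
    (hu : ∀ i, ContDiffAt ℝ n (u i) z) (t : ℝ) : ContDiffAt ℝ n (polynomialFamily φ u) (z, t) :=
  (hφ.comp (z, t) contDiffAt_fst).add (ContDiffAt.sum fun i _ =>
    (contDiffAt_snd.pow _).smul ((hu i).comp (z, t) contDiffAt_fst))

theorem fderiv_polynomialFamily_fst (hφ : ContDiffAt ℝ 1 φ z) (hu : ∀ i, ContDiffAt ℝ 1 (u i) z)
    (t : ℝ) (w : Z) : fderiv ℝ (polynomialFamily φ u) (z, t) (w, 0) =
      polynomialFamily (fun y => fderiv ℝ φ y w) (fun i y => fderiv ℝ (u i) y w) (z, t) := by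
  have hslice : HasFDerivAt (fun y => polynomialFamily φ u (y, t))
      (fderiv ℝ φ z + ∑ i : Fin k, t ^ ((i : ℕ) + 1) • fderiv ℝ (u i) z) z :=
    (hφ.differentiableAt one_ne_zero).hasFDerivAt.add (.fun_sum fun i _ =>
      ((hu i).differentiableAt one_ne_zero).hasFDerivAt.fun_const_smul
        (t ^ ((i : ℕ) + 1)))
  have := (hasFDerivAt_slice
    ((contDiffAt_polynomialFamily hφ hu t).differentiableAt one_ne_zero)).unique hslice
  simpa [polynomialFamily] using DFunLike.congr_fun this w

theorem fderiv_polynomialFamily_snd (hφ : ContDiffAt ℝ 1 φ z) (hu : ∀ i, ContDiffAt ℝ 1 (u i) z)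
    (t : ℝ) : fderiv ℝ (polynomialFamily φ u) (z, t) (0, 1) =
      ∑ i : Fin k, t ^ (i : ℕ) • (((i : ℕ) + 1 : ℝ) • u i z) := by
  have hslice : HasDerivAt (fun s => polynomialFamily φ u (z, s))
      (∑ i : Fin k, (((i : ℕ) + 1 : ℝ) * t ^ (i : ℕ)) • u i z) t :=
    (HasDerivAt.fun_sum fun (i : Fin k) _ => by
      simpa using (hasDerivAt_pow ((i : ℕ) + 1) t).smul_const (u i z)).const_add (φ z)
  have := (hasDerivAt_slice
    ((contDiffAt_polynomialFamily hφ hu t).differentiableAt one_ne_zero)).unique hslice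
  simpa [smul_smul, mul_comm] using this

theorem fderiv_polynomialFamily_snd_mem_polynomialCurve {u : Fin (k + 1) → Z → V}
    (hφ : ContDiffAt ℝ 1 φ z) (hu : ∀ i, ContDiffAt ℝ 1 (u i) z) :
    (fun t => fderiv ℝ (polynomialFamily φ u) (z, t) (0, 1)) ∈ polynomialCurve V k := by
  simp only [fderiv_polynomialFamily_snd hφ hu]
  exact sum_mem_polynomialCurve fun i _ =>
    polynomialCurve_mono (Nat.lt_succ_iff.1 i.isLt) (pow_smul_mem_polynomialCurve _ _)

end PolynomialFamily

section Transport

variable {E G ι : Type*} [NormedAddCommGroup E] [NormedSpace ℝ E] [FiniteDimensional ℝ E]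
  [NormedAddCommGroup G] [NormedSpace ℝ G] [Fintype ι] {k : ℕ} {f : E → G} {φ : (ι → ℝ) → E}
  {u : Fin (k + 1) → (ι → ℝ) → E} {P : E →L[ℝ] ι → ℝ} {z : ι → ℝ}

theorem cramerResidual_fderiv_polynomialFamily_eq_zero [DecidableEq ι] (hφ : ContDiffAt ℝ ∞ φ z)
    (hu : ∀ i, ContDiffAt ℝ ∞ (u i) z) (hf : ContDiffAt ℝ ∞ f (φ z))
    (hinj : Function.Injective ((fderiv ℝ f (φ z)).prod P))
    (hjet : ∀ᶠ y in 𝓝 z, ∀ j ≤ (k + 1) * (Fintype.card ι + 1),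
      iteratedDeriv j (fun t => f (polynomialFamily φ u (y, t))) 0 = 0) (t : ℝ) :
    cramerResidual (P : E →ₗ[ℝ] ι → ℝ)
      (fun j => fderiv ℝ (polynomialFamily φ u) (z, t) (Pi.single j 1, 0))
      (fderiv ℝ (polynomialFamily φ u) (z, t) (0, 1)) = 0 := by
  set Γ := polynomialFamily φ u
  have hφ1 := contDiffAt_infty.1 hφ 1
  have hu1 (i) := contDiffAt_infty.1 (hu i) 1
  have hΓ : ContDiffAt ℝ ∞ Γ (z, 0) := contDiffAt_polynomialFamily hφ hu 0
  have hΓ0 : Γ (z, 0) = φ z := polynomialFamily_zero φ u z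
  have hF : ContDiffAt ℝ ∞ (f ∘ Γ) (z, 0) := (hΓ0 ▸ hf).comp _ hΓ
  have hslice : ContinuousAt (fun s => Γ (z, s)) 0 := hΓ.continuousAt.comp (by fun_prop)
  have hchain (w : (ι → ℝ) × ℝ) : (fun s => fderiv ℝ (f ∘ Γ) (z, s) w) =ᶠ[𝓝 0]
      fun s => fderiv ℝ f (Γ (z, s)) (fderiv ℝ Γ (z, s) w) :=
    (fderiv_comp_slice_eventuallyEq (hΓ0 ▸ contDiffAt_infty.1 hf 1)
      (contDiffAt_infty.1 hΓ 1)).fun_comp (· w)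
  have hA : ContinuousAt (fun s => fderiv ℝ f (Γ (z, s))) 0 :=
    ContinuousAt.comp (hΓ0 ▸ (hf.fderiv_right (m := 0) (by simp)).continuousAt) hslice
  refine cramerResidual_eq_zero_of_isBigO_pow (N := (k + 1) * (Fintype.card ι + 1))
    (A := fun s => fderiv ℝ f (Γ (z, s))) hA (hΓ0 ▸ hinj)
    (W := fun j s => fderiv ℝ Γ (z, s) (Pi.single j 1, 0)) (d := fun _ => k + 1) (fun j => ?_)
    (fderiv_polynomialFamily_snd_mem_polynomialCurve hφ1 hu1) ?_ (fun j => ?_) ?_ t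
  · simp only [Γ, fderiv_polynomialFamily_fst hφ1 hu1]
    exact polynomialFamily_mem_polynomialCurve _ _ z
  · simp only [Finset.sum_const, Finset.card_univ, smul_eq_mul]
    linarith
  · simpa using (isBigO_pow_fderiv_fst hF (hjet.mono fun y hy j hj => hy j hj.le) _).congr'
      (hchain _) .rfl
  · simpa using (isBigO_pow_fderiv_snd hF fun j hj =>
      hjet.self_of_nhds j (Nat.lt_succ_iff.1 hj)).congr' (hchain _) .rfl

theorem transportEquationAt_comp_polynomialFamily (hφ : ContDiffAt ℝ ∞ φ z)
    (hu : ∀ i, ContDiffAt ℝ ∞ (u i) z) (hP : ∀ᶠ y in 𝓝 z, P (φ y) = y)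
    (hf : ContDiffAt ℝ ∞ f (φ z)) (hinj : Function.Injective ((fderiv ℝ f (φ z)).prod P))
    (hjet : ∀ᶠ y in 𝓝 z, ∀ j ≤ (k + 1) * (Fintype.card ι + 1),
      iteratedDeriv j (fun t => f (polynomialFamily φ u (y, t))) 0 = 0) :
    TransportEquationAt (f ∘ polynomialFamily φ u) z 0 := by
  classical
  have hφ1 := contDiffAt_infty.1 hφ 1
  have hu1 (i) := contDiffAt_infty.1 (hu i) 1
  have hW (w : ι → ℝ) :
      Continuous fun t => fderiv ℝ (polynomialFamily φ u) (z, t) (w, 0) := by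
    simp only [fderiv_polynomialFamily_fst hφ1 hu1]
    exact continuous_of_mem_polynomialCurve (polynomialFamily_mem_polynomialCurve _ _ z)
  have hc := continuous_of_mem_polynomialCurve
    (fderiv_polynomialFamily_snd_mem_polynomialCurve hφ1 hu1)
  have hid : P ∘L fderiv ℝ φ z = .id ℝ (ι → ℝ) :=
    (P.hasFDerivAt.comp z (hφ1.differentiableAt one_ne_zero).hasFDerivAt).unique
      ((hasFDerivAt_id z).congr_of_eventuallyEq hP)
  have hdet : (coordinateMatrix (P : E →ₗ[ℝ] ι → ℝ)
      (fun j => fderiv ℝ (polynomialFamily φ u) (z, 0) (Pi.single j 1, 0))).det ≠ 0 := by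
    simp only [fderiv_polynomialFamily_fst hφ1 hu1, polynomialFamily_zero]
    have := coordinateMatrix_eq_one (congrArg ContinuousLinearMap.toLinearMap hid)
    exact (congrArg Matrix.det this).trans_ne (by simp)
  obtain ⟨a, ha, hsum⟩ := exists_continuousAt_sum_smul_eq P
    (fun j => (hW (Pi.single j 1)).continuousAt) hc.continuousAt hdet
    (.of_forall (cramerResidual_fderiv_polynomialFamily_eq_zero hφ hu hf hinj hjet))
  refine ⟨a, ha, ?_⟩
  have hf1 : ContDiffAt ℝ 1 f (polynomialFamily φ u (z, 0)) :=
    (polynomialFamily_zero φ u z).symm ▸ contDiffAt_infty.1 hf 1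
  filter_upwards [hsum,
    fderiv_comp_slice_eventuallyEq hf1 (contDiffAt_polynomialFamily hφ1 hu1 0)] with s hs hchain
  rw [hchain, ContinuousLinearMap.comp_apply, ContinuousLinearMap.comp_apply, ← hs,
    prodMk_zero_eq_sum_single (a s)]
  simp only [map_sum, map_smul]

end Transport

section LocalTheorem

variable {E G : Type*} [NormedAddCommGroup E] [NormedSpace ℝ E] [FiniteDimensional ℝ E]
  [NormedAddCommGroup G] [NormedSpace ℝ G] [CompleteSpace G]

theorem eventually_apply_polynomialFamily_eq_zero {ι : Type*} [Fintype ι] {k : ℕ} {f : E → G}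
    {φ : (ι → ℝ) → E} {u : Fin (k + 1) → (ι → ℝ) → E} {P : E →L[ℝ] ι → ℝ} {z : ι → ℝ}
    (hφ : ∀ᶠ y in 𝓝 z, ContDiffAt ℝ ∞ φ y) (hu : ∀ᶠ y in 𝓝 z, ∀ i, ContDiffAt ℝ ∞ (u i) y)
    (hP : ∀ᶠ y in 𝓝 z, P (φ y) = y) (hf : AnalyticAt ℝ f (φ z))
    (hinj : Function.Injective ((fderiv ℝ f (φ z)).prod P))
    (hjet : ∀ᶠ y in 𝓝 z, ∀ j ≤ (k + 1) * (Fintype.card ι + 1),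
      iteratedDeriv j (fun t => f (polynomialFamily φ u (y, t))) 0 = 0) :
    ∀ᶠ t in 𝓝 0, f (polynomialFamily φ u (z, t)) = 0 := by
  have hφc : ContinuousAt φ z := hφ.self_of_nhds.continuousAt
  have hf' : ∀ᶠ y in 𝓝 z, ContDiffAt ℝ ∞ f (φ y) :=
    hφc.eventually (hf.eventually_analyticAt.mono fun x hx => hx.contDiffAt)
  have hinj' : ∀ᶠ y in 𝓝 z, Function.Injective ((fderiv ℝ f (φ y)).prod P) := by
    have hfderiv : ContinuousAt (fun y => (fderiv ℝ f (φ y)).prod P) z :=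
      ((ContinuousLinearMap.prodₗᵢ ℝ (𝕜 := ℝ)).continuous.continuousAt).comp
        ((hf.fderiv.continuousAt.comp hφc).prodMk continuousAt_const)
    exact hfderiv.eventually_mem (ContinuousLinearMap.isOpen_injective.mem_nhds hinj)
  have htransport : ∀ᶠ y in 𝓝 z, TransportEquationAt (f ∘ polynomialFamily φ u) y 0 := by
    filter_upwards [hφ, hu, eventually_eventually_nhds.2 hP, hf', hinj',
      eventually_eventually_nhds.2 hjet] with y hφy huy hPy hfy hinjy hjety
    exact transportEquationAt_comp_polynomialFamily hφy huy hPy hfy hinjy hjety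
  have hsmooth : ∀ᶠ y in 𝓝 z, ContDiffAt ℝ ∞ (f ∘ polynomialFamily φ u) (y, 0) := by
    filter_upwards [hφ, hu, hf'] with y hφy huy hfy
    exact ((polynomialFamily_zero φ u y).symm ▸ hfy).comp (y, 0)
      (contDiffAt_polynomialFamily hφy huy 0)
  have hzero : ∀ᶠ y in 𝓝 z, (f ∘ polynomialFamily φ u) (y, 0) = 0 :=
    hjet.mono fun y hy => by simpa using hy 0 (Nat.zero_le _)
  have hslice : AnalyticAt ℝ (fun t => f (polynomialFamily φ u (z, t))) 0 :=
    AnalyticAt.comp (g := f) ((polynomialFamily_zero φ u z).symm ▸ hf)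
      (analyticAt_polynomialFamily_slice φ u z 0)
  exact eventually_eq_zero_of_iteratedDeriv_eq_zero hslice fun j =>
    (iteratedDeriv_slice_eq_zero_of_transportEquationAt hsmooth hzero htransport
      (j + 1)).self_of_nhds j j.lt_succ_self

theorem eventually_apply_curve_eq_zero {k : ℕ} {f : E → G} {p : E} {v : Fin (k + 1) → E → E}
    (hf : AnalyticAt ℝ f p) (hsurj : Function.Surjective (fderiv ℝ f p)) (hfp : f p = 0)
    (hv : ∀ i, ContDiff ℝ ∞ (v i))
    (hjet : ∀ᶠ x in 𝓝 p, f x = 0 →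
      ∀ j ≤ (k + 1) * (Module.finrank ℝ (fderiv ℝ f p).ker + 1),
        iteratedDeriv j (fun t => f (polynomialFamily id v (x, t))) 0 = 0) :
    ∀ᶠ t in 𝓝 0, f (polynomialFamily id v (p, t)) = 0 := by
  obtain ⟨P, φ, hφp, hφ, hfiber, hinj⟩ :=
    exists_contDiffAt_fiber_parametrization (n := ω) (by simp) hf.contDiffAt hsurj
  have hφ' : ∀ᶠ z in 𝓝 (P p), ContDiffAt ℝ ∞ φ z :=
    (hφ.eventually (by simp)).mono fun z hz => hz.of_le le_top
  have hφtendsto : Tendsto φ (𝓝 (P p)) (𝓝 p) := by simpa only [hφp] using hφ.continuousAt.tendsto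
  have hlocal := eventually_apply_polynomialFamily_eq_zero (u := fun i => v i ∘ φ) hφ'
    (hφ'.mono fun z hz i => (hv i).contDiffAt.comp z hz) (hfiber.mono fun z hz => hz.2)
    (hφp.symm ▸ hf) (hφp.symm ▸ hinj) ?_
  · simpa only [polynomialFamily, Function.comp_apply, hφp, id] using hlocal
  · filter_upwards [hφtendsto.eventually hjet, hfiber] with z hz hfz
    rw [Fintype.card_fin]
    exact hz (hfz.1.trans hfp)

end LocalTheorem

section Contact

theorem iteratedDeriv_comp_congr {E G : Type*} [NormedAddCommGroup E] [NormedSpace ℝ E]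
    [NormedAddCommGroup G] [NormedSpace ℝ G] {f : E → G} {γ δ : ℝ → E} {t : ℝ} {N : ℕ}
    (hf : ContDiffAt ℝ N f (γ t)) (hγ : ContDiffAt ℝ N γ t) (hδ : ContDiffAt ℝ N δ t)
    (h : ∀ j ≤ N, iteratedDeriv j γ t = iteratedDeriv j δ t) {j : ℕ} (hj : j ≤ N) :
    iteratedDeriv j (fun s => f (γ s)) t = iteratedDeriv j (fun s => f (δ s)) t := by
  have hpoint : γ t = δ t := by simpa using h 0 (Nat.zero_le N)
  have hjN : (j : ℕ∞ω) ≤ N := by exact_mod_cast hj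
  have hjet : ∀ i ≤ N, iteratedFDeriv ℝ i γ t = iteratedFDeriv ℝ i δ t := fun i hi => by
    simp only [iteratedFDeriv_eq_equiv_comp, Function.comp_apply, h i hi]
  have hcomp : iteratedFDeriv ℝ j (f ∘ γ) t = iteratedFDeriv ℝ j (f ∘ δ) t := by
    rw [iteratedFDeriv_comp hf hγ hjN, iteratedFDeriv_comp (hpoint ▸ hf) hδ hjN, hpoint]
    refine Finset.sum_congr rfl fun c _ => congrArg _ (funext fun i => ?_)
    exact hjet _ ((c.partSize_le i).trans hj)
  exact congrArg (· fun _ => 1) hcomp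

variable {n m : ℕ} {M : Set (EuclideanSpace ℝ (Fin n))}

theorem HasContactOrderAt.iteratedDeriv_comp_eq_zero {N : ℕ} {G : Type*} [NormedAddCommGroup G]
    [NormedSpace ℝ G] {γ : ℝ → EuclideanSpace ℝ (Fin n)} (h : HasContactOrderAt N γ M)
    (hγ : ContDiffAt ℝ N γ 0) {f : EuclideanSpace ℝ (Fin n) → G}
    (hf : ContDiffAt ℝ N f (γ 0)) (hfM : ∀ᶠ x in 𝓝 (γ 0), x ∈ M → f x = 0) {j : ℕ} (hj : j ≤ N) :
    iteratedDeriv j (fun t => f (γ t)) 0 = 0 := by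
  obtain ⟨δ, hδ, hδM, hjet⟩ := h
  have hpoint : γ 0 = δ 0 := by simpa using hjet 0 (Nat.zero_le N)
  have hfδ : (fun t => f (δ t)) =ᶠ[𝓝 0] fun _ => 0 :=
    (hδ.continuous.continuousAt.eventually (hpoint ▸ hfM)).mono fun t ht => ht (hδM t)
  rw [iteratedDeriv_comp_congr hf hγ (contDiff_infty.1 hδ N).contDiffAt hjet hj,
    hfδ.iteratedDeriv_eq, iteratedDeriv_fun_const_zero]

theorem IsAnalyticSubmanifold.eventually_polynomialFamily_mem {k : ℕ}
    (hM : IsAnalyticSubmanifold m M)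
    {v : Fin (k + 1) → EuclideanSpace ℝ (Fin n) → EuclideanSpace ℝ (Fin n)}
    (hv : ∀ i, ContDiff ℝ ∞ (v i))
    (hcontact : ∀ x ∈ M,
      HasContactOrderAt ((k + 1) * (m + 1)) (fun t => polynomialFamily id v (x, t)) M)
    {x : EuclideanSpace ℝ (Fin n)} (hx : x ∈ M) :
    ∀ᶠ t in 𝓝 0, polynomialFamily id v (x, t) ∈ M := by
  obtain ⟨U, hU, hxU, f, hf, hsurj, hMU⟩ := hM x hx
  have mem_iff {y} (hy : y ∈ U) : y ∈ M ↔ f y = 0 := by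
    simpa [hy] using Set.ext_iff.1 hMU y
  have hdim : Module.finrank ℝ (fderiv ℝ f x).ker ≤ m := by
    have hrank := (fderiv ℝ f x).toLinearMap.finrank_range_add_finrank_ker
    rw [LinearMap.range_eq_top.2 (hsurj x hxU), finrank_top, finrank_euclideanSpace_fin,
      finrank_euclideanSpace_fin] at hrank
    exact (by omega)
  have hjet : ∀ᶠ y in 𝓝 x, f y = 0 →
      ∀ j ≤ (k + 1) * (Module.finrank ℝ (fderiv ℝ f x).ker + 1),
        iteratedDeriv j (fun t => f (polynomialFamily id v (y, t))) 0 = 0 := by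
    filter_upwards [hU.mem_nhds hxU] with y hy hfy j hj
    have hy0 : polynomialFamily id v (y, 0) = y := polynomialFamily_zero id v y
    refine (hcontact y ((mem_iff hy).2 hfy)).iteratedDeriv_comp_eq_zero
      (analyticAt_polynomialFamily_slice id v y 0).contDiffAt ?_ ?_ (hj.trans (by gcongr))
    · exact hy0.symm ▸ (hf y hy).contDiffAt
    · filter_upwards [hU.mem_nhds (hy0.symm ▸ hy)] with w hw using (mem_iff hw).1
  have hcont : Tendsto (fun t => polynomialFamily id v (x, t)) (𝓝 0) (𝓝 x) := by
    simpa [polynomialFamily_zero] using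
      (analyticAt_polynomialFamily_slice id v x 0).continuousAt.tendsto
  filter_upwards [hcont.eventually (hU.mem_nhds hxU), eventually_apply_curve_eq_zero
    (hf x hxU) (hsurj x hxU) ((mem_iff hxU).1 hx) hv hjet] with t htU htf
  exact (mem_iff htU).2 htf

theorem IsAnalyticSubmanifold.forall_mem_of_eventually_mem (hM : IsAnalyticSubmanifold m M)
    (hMc : IsClosed M) {γ : ℝ → EuclideanSpace ℝ (Fin n)} (hγ : ∀ t, AnalyticAt ℝ γ t) {t₀ : ℝ}
    (h₀ : ∀ᶠ t in 𝓝 t₀, γ t ∈ M) (t : ℝ) : γ t ∈ M := by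
  have hγc : Continuous γ := continuous_iff_continuousAt.2 fun t => (hγ t).continuousAt
  set A := {t | ∀ᶠ s in 𝓝 t, γ s ∈ M}
  have hAo : IsOpen A := isOpen_setOfPred_eventually_nhds
  have hAM : A ⊆ γ ⁻¹' M := fun s hs => hs.self_of_nhds
  have hAc : IsClosed A := by
    refine isClosed_of_closure_subset fun s hs => ?_
    have hsM : γ s ∈ M := (hMc.preimage hγc).closure_subset_iff.2 hAM hs
    obtain ⟨U, hU, hsU, f, hf, -, hMU⟩ := hM _ hsM
    have hUs : ∀ᶠ r in 𝓝 s, γ r ∈ U := hγc.continuousAt.eventually_mem (hU.mem_nhds hsU)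
    have hfγ : AnalyticAt ℝ (fun r => f (γ r)) s :=
      AnalyticAt.comp (g := f) (f := γ) (hf _ hsU) (hγ s)
    have hzero : ∃ᶠ r in 𝓝 s, r ∈ A := mem_closure_iff_frequently.1 hs
    rcases hfγ.eventually_eq_zero_or_eventually_ne_zero with hfs | hfs
    · filter_upwards [hfs, hUs] with r hfr hrU using (hMU.superset ⟨hrU, hfr⟩).1
    · obtain ⟨r, hrA, hr, hrU⟩ :=
        (hzero.and_eventually ((eventually_nhdsWithin_iff.1 hfs).and hUs)).exists
      by_contra hsA
      exact hr (fun hrs => hsA (hrs ▸ hrA)) (hMU.subset ⟨hAM hrA, hrU⟩).2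
  have hAu : A = Set.univ := IsClopen.eq_univ ⟨hAc, hAo⟩ ⟨t₀, h₀⟩
  exact hAM (hAu ▸ Set.mem_univ t)

end Contact

/-- Generalized Monge–Cayley–Salmon theorem: if every point `x` of a proper (closed)
`m`-dimensional real-analytic submanifold `M ⊆ ℝⁿ` admits a class-`k` curve
`γ_x(t) = x + t·v₁(x) + ⋯ + tᵏ·v_k(x)` (with `v₁, …, v_k` smooth) having contact of
order `k(m+1)` with `M` at `t = 0`, then each curve `γ_x` lies entirely in `M`. -/
theorem generalized_monge_cayley_salmon {n m k : ℕ} (hmn : m ≤ n)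
    (M : Set (EuclideanSpace ℝ (Fin n))) (hMclosed : IsClosed M)
    (hM : IsAnalyticSubmanifold m M)
    (v : Fin k → EuclideanSpace ℝ (Fin n) → EuclideanSpace ℝ (Fin n))
    (hv : ∀ i, ContDiff ℝ (⊤ : ℕ∞) (v i))
    (γ : EuclideanSpace ℝ (Fin n) → ℝ → EuclideanSpace ℝ (Fin n))
    (hγ : ∀ x t, γ x t = x + ∑ i : Fin k, t ^ ((i : ℕ) + 1) • v i x)
    (hcontact : ∀ x ∈ M, HasContactOrderAt (k * (m + 1)) (γ x) M) :
    ∀ x ∈ M, ∀ t : ℝ, γ x t ∈ M := by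
  intro x hx t
  obtain rfl : γ = fun x t => polynomialFamily id v (x, t) := funext₂ hγ
  cases k with
  | zero => simpa [polynomialFamily] using hx
  | succ k =>
    exact hM.forall_mem_of_eventually_mem hMclosed (analyticAt_polynomialFamily_slice id v x)
      (hM.eventually_polynomialFamily_mem hv hcontact hx) t
end

section
/- (Monge–Cayley–Salmon) Let M ⊆ ℝ³ be a proper (i.e., closed in ℝ³) 2-dimensional real-analytic submanifold. Let v : ℝ³ → ℝ³ be a C^∞ map with v(x) ≠ 0 for all x ∈ M, and for x ∈ M let ℓ_x be the line ℓ_x = {x + t·v(x) : t ∈ ℝ}. Assume that for every x ∈ M the curve t ↦ x + t·v(x) has contact of order 3 with M at t = 0. Then ℓ_x ⊆ M for every x ∈ M. -/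
/-!
Let `w = Dv(v)` be the acceleration of the field `v`, and let `f = 0` be a local equation of `M`.
Third order contact says `Df(v) = D²f(v, v) = D³f(v, v, v) = 0` on `M`; differentiating the first
two of these identities along `v` shows that `w` is tangent to `M` and `D²f(v, w) = 0`.

Where `v` and `w` are independent they span the tangent planes, and differentiating once more,
`D²f(v, w) = 0` along `v` and `D²f(v, v) = 0` along `w`, gives `D²f(w, w) = 0`: the second
fundamental form vanishes, so covariant derivatives of the fields `a v + b w` are again combinations
of `v` and `w`. Where `w` is a multiple of `v`, the same holds for the multiples of `v` alone. In
both cases induction on the order shows that every derivative of `f` vanishes along `v`, so `M`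
contains a segment of the line by analyticity, and then the whole line because `M` is closed. Points
of neither kind are limits of points of the first kind.
-/

open Filter Topology Set

section Jets

variable {𝕜 E F G : Type*} [NontriviallyNormedField 𝕜]
  [NormedAddCommGroup E] [NormedSpace 𝕜 E] [NormedAddCommGroup F] [NormedSpace 𝕜 F]
  [NormedAddCommGroup G] [NormedSpace 𝕜 G] {n : ℕ}

theorem iteratedFDeriv_comp_congr {g : F → G} {γ δ : E → F} {x : E}
    (hg : ContDiffAt 𝕜 n g (γ x)) (hγ : ContDiffAt 𝕜 n γ x) (hδ : ContDiffAt 𝕜 n δ x)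
    (h : ∀ j ≤ n, iteratedFDeriv 𝕜 j γ x = iteratedFDeriv 𝕜 j δ x) :
    iteratedFDeriv 𝕜 n (g ∘ γ) x = iteratedFDeriv 𝕜 n (g ∘ δ) x := by
  have h0 : γ x = δ x := by simpa using DFunLike.congr_fun (h 0 n.zero_le) 0
  rw [iteratedFDeriv_comp hg hγ le_rfl, iteratedFDeriv_comp (h0 ▸ hg) hδ le_rfl, h0]
  refine Finset.sum_congr rfl fun c _ => ?_
  ext z
  simp only [FormalMultilinearSeries.compAlongOrderedFinpartition_apply, ftaylorSeries,
    OrderedFinpartition.applyOrderedFinpartition_apply, h _ (c.partSize_le _)]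

theorem iteratedFDeriv_eq_iff_iteratedDeriv_eq {γ δ : 𝕜 → F} {t : 𝕜} :
    iteratedFDeriv 𝕜 n γ t = iteratedFDeriv 𝕜 n δ t ↔
      iteratedDeriv n γ t = iteratedDeriv n δ t := by
  simp only [iteratedFDeriv_eq_equiv_comp, Function.comp_apply, EmbeddingLike.apply_eq_iff_eq]

theorem eventually_iteratedDeriv_comp_add_smul {f : E → F} {x : E} (hf : ContDiffAt 𝕜 n f x)
    (u : E) :
    ∀ᶠ t : 𝕜 in 𝓝 0, iteratedDeriv n (fun s : 𝕜 => f (x + s • u)) t =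
      iteratedFDeriv 𝕜 n f (x + t • u) (fun _ => u) := by
  induction n with
  | zero => simp
  | succ n ih =>
    have hline : Tendsto (fun t : 𝕜 => x + t • u) (𝓝 0) (𝓝 x) :=
      Continuous.tendsto' (by fun_prop) _ _ (by simp)
    have hsmooth := hline.eventually (hf.eventually (by simp))
    filter_upwards [(ih (hf.of_le (by norm_cast; exact n.le_succ))).eventually_nhds, hsmooth]
      with t ht hft
    rw [iteratedDeriv_succ, EventuallyEq.deriv_eq ht]
    exact ContDiffAt.deriv_fderiv_add_smul hft

end Jets

namespace HasContactOrderAt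

theorem iteratedFDeriv_eq_zero {n k : ℕ} {M : Set (EuclideanSpace ℝ (Fin n))}
    {F : Type*} [NormedAddCommGroup F] [NormedSpace ℝ F] {x u : EuclideanSpace ℝ (Fin n)}
    (h : HasContactOrderAt k (fun t => x + t • u) M) {f : EuclideanSpace ℝ (Fin n) → F}
    (hf : ContDiffAt ℝ k f x) (hfM : ∀ᶠ y in 𝓝 x, y ∈ M → f y = 0) {j : ℕ} (hj : j ≤ k) :
    iteratedFDeriv ℝ j f x (fun _ => u) = 0 := by
  obtain ⟨δ, hδ, hδM, hjet⟩ := h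
  have hδ0 : δ 0 = x := by simpa using (hjet 0 k.zero_le).symm
  have hfj : ContDiffAt ℝ j f x := hf.of_le (by exact_mod_cast hj)
  have hfδ : f ∘ δ =ᶠ[𝓝 0] fun _ => 0 := by
    have hδ_tendsto : Tendsto δ (𝓝 0) (𝓝 x) := hδ.continuous.tendsto' 0 x hδ0
    exact (hδ_tendsto.eventually hfM).mono fun t ht => ht (hδM t)
  calc iteratedFDeriv ℝ j f x (fun _ => u)
      = iteratedDeriv j (f ∘ fun t : ℝ => x + t • u) 0 := by
        simpa [Function.comp_def] using
          (eventually_iteratedDeriv_comp_add_smul hfj u).self_of_nhds.symm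
    _ = iteratedDeriv j (f ∘ δ) 0 := by
        refine iteratedFDeriv_eq_iff_iteratedDeriv_eq.1 <| iteratedFDeriv_comp_congr
          (by simpa using hfj) (by fun_prop) (contDiff_infty.1 hδ j).contDiffAt fun i hi => ?_
        exact iteratedFDeriv_eq_iff_iteratedDeriv_eq.2 (hjet i (hi.trans hj))
    _ = 0 := by rw [hfδ.iteratedDeriv_eq]; simp

end HasContactOrderAt

section LevelSets

variable {E F G : Type*} [NormedAddCommGroup E] [NormedSpace ℝ E]
  [NormedAddCommGroup F] [NormedSpace ℝ F] [NormedAddCommGroup G] [NormedSpace ℝ G]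

theorem eventually_eq_zero_along_line_of_analyticAt [CompleteSpace F] {f : E → F} {x u : E}
    (hf : AnalyticAt ℝ f x) (h : ∀ k, iteratedFDeriv ℝ k f x (fun _ => u) = 0) :
    ∀ᶠ t : ℝ in 𝓝 0, f (x + t • u) = 0 := by
  obtain ⟨p, r, hp⟩ := hf
  have hline : Tendsto (fun t : ℝ => t • u) (𝓝 0) (𝓝 0) :=
    Continuous.tendsto' (by fun_prop) _ _ (by simp)
  filter_upwards [hline (Metric.eball_mem_nhds 0 hp.r_pos)] with t ht
  have hterm (k : ℕ) : iteratedFDeriv ℝ k f x (fun _ => t • u) = 0 := by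
    rw [(iteratedFDeriv ℝ k f x).map_smul_univ (fun _ => t) (fun _ => u), h k, smul_zero]
  have hsum := hp.hasSum_iteratedFDeriv ht
  simp only [hterm, smul_zero] at hsum
  exact hsum.unique hasSum_zero

theorem apply_eq_zero_of_const_on_levelSet [CompleteSpace E] [FiniteDimensional ℝ F]
    {f : E → F} {f' : E →L[ℝ] F} {φ : E → G} {φ' : E →L[ℝ] G} {x u : E}
    (hf : HasStrictFDerivAt f f' x) (hf' : Function.Surjective f') (hφ : HasFDerivAt φ φ' x)
    (hconst : ∀ᶠ y in 𝓝 x, f y = f x → φ y = φ x) (hu : f' u = 0) : φ' u = 0 := by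
  have hrange : f'.range = ⊤ := LinearMap.range_eq_top.2 hf'
  set ψ : f'.ker → E := hf.implicitFunction f f' hrange (f x)
  have hψ0 : ψ 0 = x := hf.implicitFunction_apply_image hrange
  have hψ : HasFDerivAt ψ f'.ker.subtypeL 0 := (hf.to_implicitFunction hrange).hasFDerivAt
  have hψ_tendsto : Tendsto ψ (𝓝 0) (𝓝 x) := by simpa [hψ0] using hψ.continuousAt.tendsto
  have hfψ : ∀ᶠ z in 𝓝 0, f (ψ z) = f x :=
    (tendsto_const_nhds.prodMk_nhds tendsto_id).eventually (hf.map_implicitFunction_eq hrange)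
  have hφψ : φ ∘ ψ =ᶠ[𝓝 0] fun _ => φ x := by
    filter_upwards [hfψ, hψ_tendsto.eventually hconst] with z hz hφz using hφz hz
  have hderiv : φ'.comp f'.ker.subtypeL = 0 :=
    ((hψ0 ▸ hφ).comp 0 hψ).unique ((hasFDerivAt_const (φ x) 0).congr_of_eventuallyEq hφψ)
  exact DFunLike.congr_fun hderiv ⟨u, hu⟩

end LevelSets

/-- `f` is a local equation of `M` on the open set `U`: an analytic submersion whose zero set in `U`
is `M ∩ U`. This is the data in `IsAnalyticSubmanifold`, for arbitrary normed spaces. -/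
structure IsLocalEquation {E F : Type*} [NormedAddCommGroup E] [NormedSpace ℝ E]
    [NormedAddCommGroup F] [NormedSpace ℝ F] (M U : Set E) (f : E → F) : Prop where
  isOpen : IsOpen U
  analyticOnNhd : AnalyticOnNhd ℝ f U
  surjective : ∀ x ∈ U, Function.Surjective (fderiv ℝ f x)
  mem_iff : ∀ x ∈ U, x ∈ M ↔ f x = 0

namespace IsLocalEquation

variable {E F : Type*} [NormedAddCommGroup E] [NormedSpace ℝ E]
  [NormedAddCommGroup F] [NormedSpace ℝ F] {M U : Set E} {f : E → F} {x u : E}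

theorem analyticAt (hf : IsLocalEquation M U f) (hx : x ∈ M ∩ U) : AnalyticAt ℝ f x :=
  hf.analyticOnNhd x hx.2

theorem eventually_mem_of_tendsto (hf : IsLocalEquation M U f) {α : Type*} {l : Filter α}
    {γ : α → E} (hx : x ∈ U) (hγ : Tendsto γ l (𝓝 x)) (h : ∀ᶠ a in l, f (γ a) = 0) :
    ∀ᶠ a in l, γ a ∈ M := by
  filter_upwards [h, hγ (hf.isOpen.mem_nhds hx)] with a ha haU using (hf.mem_iff _ haU).2 ha

theorem finrank_ker_add_finrank [FiniteDimensional ℝ E] (hf : IsLocalEquation M U f)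
    (hx : x ∈ U) :
    Module.finrank ℝ (fderiv ℝ f x).ker + Module.finrank ℝ F = Module.finrank ℝ E := by
  rw [← LinearMap.finrank_range_add_finrank_ker (fderiv ℝ f x : E →ₗ[ℝ] F),
    LinearMap.range_eq_top.2 (hf.surjective x hx), finrank_top, add_comm]

variable [CompleteSpace E] [FiniteDimensional ℝ F]

theorem apply_eq_zero (hf : IsLocalEquation M U f) {G : Type*} [NormedAddCommGroup G]
    [NormedSpace ℝ G] {φ : E → G} {φ' : E →L[ℝ] G} (hx : x ∈ M ∩ U) (hφ : HasFDerivAt φ φ' x)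
    (h : ∀ y ∈ M ∩ U, φ y = 0) (hu : fderiv ℝ f x u = 0) : φ' u = 0 := by
  refine apply_eq_zero_of_const_on_levelSet (hf.analyticAt hx).hasStrictFDerivAt
    (hf.surjective x hx.2) hφ ?_ hu
  filter_upwards [hf.isOpen.mem_nhds hx.2] with y hyU hy
  rw [h x hx, h y ⟨(hf.mem_iff y hyU).2 (hy.trans ((hf.mem_iff x hx.2).1 hx.1)), hyU⟩]

theorem fderiv_tangent (hf : IsLocalEquation M U f) {a : E → E} (hx : x ∈ M ∩ U)
    (ha : DifferentiableAt ℝ a x) (h : ∀ y ∈ M ∩ U, fderiv ℝ f y (a y) = 0)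
    (hu : fderiv ℝ f x u = 0) :
    fderiv ℝ (fderiv ℝ f) x u (a x) + fderiv ℝ f x (fderiv ℝ a x u) = 0 := by
  have hD := (hf.analyticAt hx).fderiv.differentiableAt.hasFDerivAt.clm_apply ha.hasFDerivAt
  simpa [add_comm] using hf.apply_eq_zero hx hD h hu

theorem fderiv_conjugate (hf : IsLocalEquation M U f) {a b : E → E} (hx : x ∈ M ∩ U)
    (ha : DifferentiableAt ℝ a x) (hb : DifferentiableAt ℝ b x)
    (h : ∀ y ∈ M ∩ U, fderiv ℝ (fderiv ℝ f) y (a y) (b y) = 0) (hu : fderiv ℝ f x u = 0) :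
    fderiv ℝ (fderiv ℝ (fderiv ℝ f)) x u (a x) (b x)
      + fderiv ℝ (fderiv ℝ f) x (fderiv ℝ a x u) (b x)
      + fderiv ℝ (fderiv ℝ f) x (a x) (fderiv ℝ b x u) = 0 := by
  have hD := ((hf.analyticAt hx).fderiv.fderiv.differentiableAt.hasFDerivAt.clm_apply
    ha.hasFDerivAt).clm_apply hb.hasFDerivAt
  simpa [add_comm, add_left_comm] using hf.apply_eq_zero hx hD h hu

theorem iteratedFDeriv_eq_zero_of_autoparallel (hf : IsLocalEquation M U f) {ι : Type*}
    {X : ι → E → E} (hX : ∀ i, ∀ y ∈ M ∩ U, DifferentiableAt ℝ (X i) y)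
    (htan : ∀ i, ∀ y ∈ M ∩ U, fderiv ℝ f y (X i y) = 0)
    (hpar : ∀ i j, ∀ y ∈ M ∩ U, ∃ l, fderiv ℝ (X j) y (X i y) = X l y)
    (hx : x ∈ M ∩ U) {k : ℕ} (σ : Fin k → ι) :
    iteratedFDeriv ℝ k f x (fun i => X (σ i) x) = 0 := by
  induction k generalizing x with
  | zero => simpa using (hf.mem_iff x hx.2).1 hx.1
  | succ k ih =>
    set τ : Fin k → ι := fun i => σ i.succ
    have hcov (i : Fin k) : iteratedFDeriv ℝ k f x
        (Function.update (fun j => X (τ j) x) i (fderiv ℝ (X (τ i)) x (X (σ 0) x))) = 0 := by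
      obtain ⟨l, hl⟩ := hpar (σ 0) (τ i) x hx
      rw [hl, ← ih hx (Function.update τ i l)]
      exact congrArg _ (Function.comp_update (fun j => X j x) τ i l).symm
    have hD := (hf.analyticOnNhd.iteratedFDeriv k x hx.2).differentiableAt.hasFDerivAt
      |>.continuousMultilinearMap_apply fun i => (hX (τ i) x hx).hasFDerivAt
    have hzero := hf.apply_eq_zero hx hD (fun y hy => ih hy τ) (htan (σ 0) x hx)
    rw [iteratedFDeriv_succ_apply_left]
    change fderiv ℝ (iteratedFDeriv ℝ k f) x (X (σ 0) x) (fun i => X (τ i) x) = 0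
    simpa [ContinuousMultilinearMap.toContinuousLinearMap, hcov] using hzero

theorem eventually_line_mem_of_autoparallel (hf : IsLocalEquation M U f) {ι : Type*}
    {X : ι → E → E} (hX : ∀ i, ∀ y ∈ M ∩ U, DifferentiableAt ℝ (X i) y)
    (htan : ∀ i, ∀ y ∈ M ∩ U, fderiv ℝ f y (X i y) = 0)
    (hpar : ∀ i j, ∀ y ∈ M ∩ U, ∃ l, fderiv ℝ (X j) y (X i y) = X l y)
    (hx : x ∈ M ∩ U) (i : ι) : ∀ᶠ t : ℝ in 𝓝 0, x + t • X i x ∈ M := by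
  have := FiniteDimensional.complete ℝ F
  refine hf.eventually_mem_of_tendsto hx.2
    (Continuous.tendsto' (by fun_prop) _ _ (by simp)) ?_
  exact eventually_eq_zero_along_line_of_analyticAt (hf.analyticAt hx) fun k =>
    hf.iteratedFDeriv_eq_zero_of_autoparallel hX htan hpar hx fun _ => i

end IsLocalEquation

section Acceleration

variable {E : Type*} [NormedAddCommGroup E] [NormedSpace ℝ E] {v : E → E} {x : E}

/-- The acceleration of the integral curves of the vector field `v`: the derivative of `v` along
itself. -/
noncomputable def acceleration (v : E → E) (x : E) : E :=
  fderiv ℝ v x (v x)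

theorem contDiffAt_acceleration (hv : ContDiffAt ℝ 2 v x) : ContDiffAt ℝ 1 (acceleration v) x :=
  (hv.fderiv_right (m := 1) (by norm_num)).clm_apply (hv.of_le (by norm_num))

theorem exists_acceleration_eq_smul (h : ¬ LinearIndependent ℝ ![v x, acceleration v x]) :
    ∃ c : ℝ, acceleration v x = c • v x := by
  by_cases hvx : v x = 0
  · exact ⟨0, by simp [acceleration, hvx]⟩
  · rw [LinearIndependent.pair_iff' hvx] at h
    push Not at h
    exact h.imp fun _ => Eq.symm

theorem eventually_linearIndependent_acceleration (hv : ContDiffAt ℝ 2 v x)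
    (h : LinearIndependent ℝ ![v x, acceleration v x]) :
    ∀ᶠ y in 𝓝 x, LinearIndependent ℝ ![v y, acceleration v y] := by
  have hpair : ContinuousAt (fun y => ![v y, acceleration v y]) x :=
    continuousAt_pi.2 <| Fin.forall_fin_two.2
      ⟨hv.continuousAt, (contDiffAt_acceleration hv).continuousAt⟩
  exact hpair.eventually h.eventually

end Acceleration

/-- The lines `x + ℝ v(x)` meet `M = {f = 0}` to third order at the points of `M ∩ U`, expressed
through the derivatives of `f`; such directions are called flecnodal. -/
structure IsFlecnodalField {E F : Type*} [NormedAddCommGroup E] [NormedSpace ℝ E]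
    [NormedAddCommGroup F] [NormedSpace ℝ F] (M U : Set E) (f : E → F) (v : E → E) : Prop where
  tangent : ∀ x ∈ M ∩ U, fderiv ℝ f x (v x) = 0
  asymptotic : ∀ x ∈ M ∩ U, fderiv ℝ (fderiv ℝ f) x (v x) (v x) = 0
  third : ∀ x ∈ M ∩ U, fderiv ℝ (fderiv ℝ (fderiv ℝ f)) x (v x) (v x) (v x) = 0

namespace IsFlecnodalField

theorem of_hasContactOrderAt {n : ℕ} {F : Type*} [NormedAddCommGroup F] [NormedSpace ℝ F]
    [CompleteSpace F] {M U : Set (EuclideanSpace ℝ (Fin n))} {f : EuclideanSpace ℝ (Fin n) → F}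
    {v : EuclideanSpace ℝ (Fin n) → EuclideanSpace ℝ (Fin n)} (hf : IsLocalEquation M U f)
    (h : ∀ x ∈ M, HasContactOrderAt 3 (fun t => x + t • v x) M) : IsFlecnodalField M U f v := by
  have hjet {x} (hx : x ∈ M ∩ U) {j : ℕ} (hj : j ≤ 3) :
      iteratedFDeriv ℝ j f x (fun _ => v x) = 0 := by
    refine (h x hx.1).iteratedFDeriv_eq_zero (hf.analyticAt hx).contDiffAt ?_ hj
    filter_upwards [hf.isOpen.mem_nhds hx.2] with y hy using (hf.mem_iff y hy).1
  refine ⟨fun x hx => ?_, fun x hx => ?_, fun x hx => ?_⟩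
  · simpa using hjet hx (j := 1) (by norm_num)
  · simpa [iteratedFDeriv_two_apply] using hjet hx (j := 2) (by norm_num)
  · simpa [iteratedFDeriv_succ_apply_right, Fin.init] using hjet hx (j := 3) le_rfl

variable {E F : Type*} [NormedAddCommGroup E] [NormedSpace ℝ E] [CompleteSpace E]
  [NormedAddCommGroup F] [NormedSpace ℝ F] [FiniteDimensional ℝ F]
  {M U : Set E} {f : E → F} {v : E → E} {x : E}

theorem acceleration_tangent (hv : IsFlecnodalField M U f v) (hf : IsLocalEquation M U f)
    (hx : x ∈ M ∩ U) (hvx : DifferentiableAt ℝ v x) : fderiv ℝ f x (acceleration v x) = 0 := by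
  have hD := hf.fderiv_tangent hx hvx hv.tangent (hv.tangent x hx)
  rw [hv.asymptotic x hx, zero_add] at hD
  exact hD

theorem acceleration_conjugate (hv : IsFlecnodalField M U f v) (hf : IsLocalEquation M U f)
    (hx : x ∈ M ∩ U) (hvx : DifferentiableAt ℝ v x) :
    fderiv ℝ (fderiv ℝ f) x (acceleration v x) (v x) = 0 := by
  have hsymm := (hf.analyticAt hx).contDiffAt.isSymmSndFDerivAt_of_omega (v x) (acceleration v x)
  have hD := hf.fderiv_conjugate hx hvx hvx hv.asymptotic (hv.tangent x hx)
  change _ + fderiv ℝ (fderiv ℝ f) x (acceleration v x) (v x)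
    + fderiv ℝ (fderiv ℝ f) x (v x) (acceleration v x) = 0 at hD
  rw [hv.third x hx, hsymm, zero_add, ← two_smul ℝ] at hD
  exact (smul_eq_zero.1 hD).resolve_left two_ne_zero

theorem acceleration_asymptotic (hv : IsFlecnodalField M U f v) (hf : IsLocalEquation M U f)
    (hvd : ∀ y ∈ M ∩ U, DifferentiableAt ℝ v y) (hx : x ∈ M ∩ U)
    (hwx : DifferentiableAt ℝ (acceleration v) x)
    (hspan : (fderiv ℝ f x).ker ≤ Submodule.span ℝ {v x, acceleration v x}) :
    fderiv ℝ (fderiv ℝ f) x (acceleration v x) (acceleration v x) = 0 := by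
  set w := acceleration v
  have hvx := hvd x hx
  have hsymm := (hf.analyticAt hx).contDiffAt.isSymmSndFDerivAt_of_omega
  have hsymm₃ := (hf.analyticAt hx).fderiv.contDiffAt.isSymmSndFDerivAt_of_omega (w x) (v x)
  have hw_tan : ∀ y ∈ M ∩ U, fderiv ℝ f y (w y) = 0 := fun y hy =>
    hv.acceleration_tangent hf hy (hvd y hy)
  have hw_conj : ∀ y ∈ M ∩ U, fderiv ℝ (fderiv ℝ f) y (w y) (v y) = 0 := fun y hy =>
    hv.acceleration_conjugate hf hy (hvd y hy)
  have hconj_v {z : E} (hz : fderiv ℝ f x z = 0) : fderiv ℝ (fderiv ℝ f) x z (v x) = 0 := by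
    obtain ⟨a, b, rfl⟩ := Submodule.mem_span_pair.1 (hspan hz)
    simp [hv.asymptotic x hx, hw_conj x hx]
  have htan_vw : fderiv ℝ f x (fderiv ℝ w x (v x)) = 0 := by
    simpa [hsymm (v x), hw_conj x hx] using
      hf.fderiv_tangent hx hwx hw_tan (hv.tangent x hx)
  have htan_wv : fderiv ℝ f x (fderiv ℝ v x (w x)) = 0 := by
    simpa [hw_conj x hx] using hf.fderiv_tangent hx hvx hv.tangent (hw_tan x hx)
  have hthird : fderiv ℝ (fderiv ℝ (fderiv ℝ f)) x (w x) (v x) (v x) = 0 := by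
    simpa [hsymm (v x), hconj_v htan_wv] using
      hf.fderiv_conjugate hx hvx hvx hv.asymptotic (hw_tan x hx)
  have hD := hf.fderiv_conjugate hx hwx hvx hw_conj (hv.tangent x hx)
  rwa [← hsymm₃, hthird, hconj_v htan_vw, zero_add, zero_add] at hD

theorem eventually_line_mem_of_acceleration_parallel (hv : IsFlecnodalField M U f v)
    (hf : IsLocalEquation M U f) (hvd : ∀ y ∈ M ∩ U, DifferentiableAt ℝ v y)
    (hpar : ∀ y ∈ M ∩ U, ∃ c : ℝ, acceleration v y = c • v y) (hx : x ∈ M ∩ U) :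
    ∀ᶠ t : ℝ in 𝓝 0, x + t • v x ∈ M := by
  suffices ∀ᶠ t : ℝ in 𝓝 0, x + t • (1 : ℝ) • v x ∈ M by simpa only [one_smul] using this
  refine hf.eventually_line_mem_of_autoparallel (X := fun c : ℝ => c • v)
    (fun c y hy => (hvd y hy).const_smul c) (fun c y hy => by simp [hv.tangent y hy])
    (fun c d y hy => ?_) hx 1
  obtain ⟨e, he⟩ := hpar y hy
  refine ⟨c * (d * e), ?_⟩
  rw [fderiv_const_smul (hvd y hy)]
  simp only [acceleration] at he
  simp [he, smul_smul]

theorem eventually_line_mem_of_tangent_le_span (hv : IsFlecnodalField M U f v)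
    (hf : IsLocalEquation M U f) (hvd : ∀ y ∈ M ∩ U, DifferentiableAt ℝ v y)
    (hwd : ∀ y ∈ M ∩ U, DifferentiableAt ℝ (acceleration v) y)
    (hspan : ∀ y ∈ M ∩ U, (fderiv ℝ f y).ker ≤ Submodule.span ℝ {v y, acceleration v y})
    (hx : x ∈ M ∩ U) : ∀ᶠ t : ℝ in 𝓝 0, x + t • v x ∈ M := by
  set X : ℝ × ℝ → E → E := fun c y => c.1 • v y + c.2 • acceleration v y
  have hX : ∀ c, ∀ y ∈ M ∩ U, DifferentiableAt ℝ (X c) y := fun c y hy =>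
    ((hvd y hy).const_smul c.1).add ((hwd y hy).const_smul c.2)
  have htan : ∀ c, ∀ y ∈ M ∩ U, fderiv ℝ f y (X c y) = 0 := fun c y hy => by
    simp [X, hv.tangent y hy, hv.acceleration_tangent hf hy (hvd y hy)]
  have hflat : ∀ c d, ∀ y ∈ M ∩ U, fderiv ℝ (fderiv ℝ f) y (X c y) (X d y) = 0 := by
    intro c d y hy
    have hwv := hv.acceleration_conjugate hf hy (hvd y hy)
    have hvw : fderiv ℝ (fderiv ℝ f) y (v y) (acceleration v y) = 0 :=
      ((hf.analyticAt hy).contDiffAt.isSymmSndFDerivAt_of_omega _ _).trans hwv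
    simp [X, hv.asymptotic y hy, hvw, hwv,
      hv.acceleration_asymptotic hf hvd hy (hwd y hy) (hspan y hy)]
  have hpar : ∀ c d, ∀ y ∈ M ∩ U, ∃ e, fderiv ℝ (X d) y (X c y) = X e y := by
    intro c d y hy
    have htan_cov : fderiv ℝ f y (fderiv ℝ (X d) y (X c y)) = 0 := by
      simpa [hflat c d y hy] using hf.fderiv_tangent hy (hX d y hy) (htan d) (htan c y hy)
    obtain ⟨a, b, hab⟩ := Submodule.mem_span_pair.1 (hspan y hy htan_cov)
    exact ⟨(a, b), hab.symm⟩
  simpa [X] using hf.eventually_line_mem_of_autoparallel hX htan hpar hx (1, 0)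

end IsFlecnodalField

theorem le_span_pair_of_finrank_le_two {K V : Type*} [DivisionRing K] [AddCommGroup V] [Module K V]
    {S : Submodule K V} [FiniteDimensional K S] (hS : Module.finrank K S ≤ 2) {a b : V}
    (ha : a ∈ S) (hb : b ∈ S) (hab : LinearIndependent K ![a, b]) :
    S ≤ Submodule.span K {a, b} := by
  have hle : Submodule.span K {a, b} ≤ S := Submodule.span_le.2 (pair_subset ha hb)
  have hfinrank := finrank_span_eq_card hab
  rw [Matrix.range_cons_cons_empty, Fintype.card_fin] at hfinrank
  exact (Submodule.eq_of_le_of_finrank_le hle (hS.trans_eq hfinrank.symm)).ge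

namespace IsAnalyticSubmanifold

variable {n m : ℕ} {M : Set (EuclideanSpace ℝ (Fin n))}

theorem exists_isLocalEquation (hM : IsAnalyticSubmanifold m M) {p : EuclideanSpace ℝ (Fin n)}
    (hp : p ∈ M) {s : Set (EuclideanSpace ℝ (Fin n))} (hs : s ∈ 𝓝 p) :
    ∃ (U : Set (EuclideanSpace ℝ (Fin n)))
      (f : EuclideanSpace ℝ (Fin n) → EuclideanSpace ℝ (Fin (n - m))),
      IsLocalEquation M U f ∧ p ∈ U ∧ U ⊆ s := by
  obtain ⟨U, hU, hpU, f, hf, hsurj, hMU⟩ := hM p hp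
  refine ⟨U ∩ interior s, f, ⟨hU.inter isOpen_interior, hf.mono inter_subset_left,
    fun x hx => hsurj x hx.1, fun x hx => ?_⟩, ⟨hpU, mem_interior_iff_mem_nhds.2 hs⟩,
    inter_subset_right.trans interior_subset⟩
  simpa [hx.1] using Set.ext_iff.1 hMU x

theorem eventually_mem_of_frequently_mem (hM : IsAnalyticSubmanifold m M) (hMc : IsClosed M)
    {γ : ℝ → EuclideanSpace ℝ (Fin n)} {t : ℝ} (hγ : AnalyticAt ℝ γ t)
    (h : ∃ᶠ s in 𝓝[≠] t, γ s ∈ M) : ∀ᶠ s in 𝓝 t, γ s ∈ M := by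
  have hγt : γ t ∈ M := hMc.mem_of_frequently_of_tendsto h
    (hγ.continuousAt.tendsto.mono_left nhdsWithin_le_nhds)
  obtain ⟨U, f, hf, htU, -⟩ := hM.exists_isLocalEquation hγt univ_mem
  have hU : ∀ᶠ s in 𝓝 t, γ s ∈ U := hγ.continuousAt.eventually (hf.isOpen.mem_nhds htU)
  have hfγ : ∃ᶠ s in 𝓝[≠] t, f (γ s) = 0 :=
    (h.and_eventually (hU.filter_mono nhdsWithin_le_nhds)).mono fun s hs =>
      (hf.mem_iff _ hs.2).1 hs.1
  exact hf.eventually_mem_of_tendsto htU hγ.continuousAt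
    (((hf.analyticAt ⟨hγt, htU⟩).comp hγ).frequently_zero_iff_eventually_zero.1 hfγ)

theorem forall_mem_of_eventually_mem_s1 (hM : IsAnalyticSubmanifold m M) (hMc : IsClosed M)
    {γ : ℝ → EuclideanSpace ℝ (Fin n)} (hγ : AnalyticOnNhd ℝ γ univ) {t₀ : ℝ}
    (h : ∀ᶠ s in 𝓝 t₀, γ s ∈ M) (t : ℝ) : γ t ∈ M := by
  set S : Set ℝ := {t | ∀ᶠ s in 𝓝 t, γ s ∈ M}
  have hopen : IsOpen S := isOpen_iff_mem_nhds.2 fun t ht => eventually_eventually_nhds.2 ht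
  have hclosed : IsClosed S := isClosed_of_closure_subset fun t ht => by
    by_contra htS
    refine htS (hM.eventually_mem_of_frequently_mem hMc (hγ t trivial) ?_)
    rw [frequently_nhdsWithin_iff]
    exact (mem_closure_iff_frequently.1 ht).mono fun s hs =>
      ⟨hs.self_of_nhds, fun hst => htS (hst ▸ hs)⟩
  have hS : S = univ := IsClopen.eq_univ ⟨hclosed, hopen⟩ ⟨t₀, h⟩
  exact (hS ▸ mem_univ t : t ∈ S).self_of_nhds

theorem line_mem_of_eventually_mem (hM : IsAnalyticSubmanifold m M) (hMc : IsClosed M)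
    {x u : EuclideanSpace ℝ (Fin n)} (h : ∀ᶠ t : ℝ in 𝓝 0, x + t • u ∈ M) (t : ℝ) :
    x + t • u ∈ M :=
  hM.forall_mem_of_eventually_mem_s1 hMc (γ := fun t : ℝ => x + t • u) (fun _ _ => by fun_prop) h t

variable {v : EuclideanSpace ℝ (Fin n) → EuclideanSpace ℝ (Fin n)} {x : EuclideanSpace ℝ (Fin n)}

theorem line_mem_of_acceleration_parallel (hM : IsAnalyticSubmanifold m M) (hMc : IsClosed M)
    (hv : ∀ y ∈ M, DifferentiableAt ℝ v y)
    (hcontact : ∀ y ∈ M, HasContactOrderAt 3 (fun t => y + t • v y) M) (hx : x ∈ M)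
    (hpar : ∀ᶠ y in 𝓝 x, y ∈ M → ∃ c : ℝ, acceleration v y = c • v y) (t : ℝ) :
    x + t • v x ∈ M := by
  obtain ⟨U, f, hf, hxU, hUpar⟩ := hM.exists_isLocalEquation hx hpar
  refine hM.line_mem_of_eventually_mem hMc ?_ t
  exact (IsFlecnodalField.of_hasContactOrderAt hf hcontact)
    |>.eventually_line_mem_of_acceleration_parallel hf (fun y hy => hv y hy.1)
      (fun y hy => hUpar hy.2 hy.1) ⟨hx, hxU⟩

theorem line_mem_of_linearIndependent (hM : IsAnalyticSubmanifold m M) (hMc : IsClosed M)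
    (hm : m ≤ 2) (hv : ∀ y ∈ M, ContDiffAt ℝ 2 v y)
    (hcontact : ∀ y ∈ M, HasContactOrderAt 3 (fun t => y + t • v y) M) (hx : x ∈ M)
    (hind : LinearIndependent ℝ ![v x, acceleration v x]) (t : ℝ) : x + t • v x ∈ M := by
  obtain ⟨U, f, hf, hxU, hUind⟩ := hM.exists_isLocalEquation hx
    (eventually_linearIndependent_acceleration (hv x hx) hind)
  have hfield := IsFlecnodalField.of_hasContactOrderAt hf hcontact
  have hvd : ∀ y ∈ M ∩ U, DifferentiableAt ℝ v y := fun y hy =>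
    (hv y hy.1).differentiableAt two_ne_zero
  have hwd : ∀ y ∈ M ∩ U, DifferentiableAt ℝ (acceleration v) y := fun y hy =>
    (contDiffAt_acceleration (hv y hy.1)).differentiableAt one_ne_zero
  refine hM.line_mem_of_eventually_mem hMc
    (hfield.eventually_line_mem_of_tangent_le_span hf hvd hwd (fun y hy => ?_) ⟨hx, hxU⟩) t
  have hdim : Module.finrank ℝ (fderiv ℝ f y).ker ≤ 2 := by
    have h := hf.finrank_ker_add_finrank hy.2
    simp only [finrank_euclideanSpace_fin] at h
    omega
  exact le_span_pair_of_finrank_le_two hdim (hfield.tangent y hy)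
    (hfield.acceleration_tangent hf hy (hvd y hy)) (hUind hy.2)

end IsAnalyticSubmanifold

theorem monge_cayley_salmon_general {n m : ℕ} (hm : m ≤ 2)
    {M : Set (EuclideanSpace ℝ (Fin n))} (hMclosed : IsClosed M) (hM : IsAnalyticSubmanifold m M)
    {v : EuclideanSpace ℝ (Fin n) → EuclideanSpace ℝ (Fin n)}
    (hv : ∀ x ∈ M, ContDiffAt ℝ 2 v x)
    (hcontact : ∀ x ∈ M, HasContactOrderAt 3 (fun t => x + t • v x) M) :
    ∀ x ∈ M, ∀ t : ℝ, x + t • v x ∈ M := by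
  intro x hx t
  by_cases hind : ∃ᶠ y in 𝓝 x, y ∈ M ∧ LinearIndependent ℝ ![v y, acceleration v y]
  · have hlines : ∃ᶠ y in 𝓝 x, y + t • v y ∈ M := hind.mono fun y hy =>
      hM.line_mem_of_linearIndependent hMclosed hm hv hcontact hy.1 hy.2 t
    have hcont : ContinuousAt (fun y => y + t • v y) x :=
      continuousAt_id.add ((hv x hx).continuousAt.const_smul t)
    exact hMclosed.mem_of_frequently_of_tendsto hlines hcont
  · refine hM.line_mem_of_acceleration_parallel hMclosed
      (fun y hy => (hv y hy).differentiableAt two_ne_zero) hcontact hx ?_ t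
    filter_upwards [not_frequently.1 hind] with y hy hyM
    exact exists_acceleration_eq_smul fun h => hy ⟨hyM, h⟩

/-- Monge–Cayley–Salmon theorem: let `M ⊆ ℝ³` be a proper (closed) `2`-dimensional
real-analytic submanifold and `v : ℝ³ → ℝ³` a smooth map, nonvanishing on `M`, such that
for every `x ∈ M` the line `t ↦ x + t·v(x)` has contact of order `3` with `M` at `t = 0`.
Then every line `ℓ_x = {x + t·v(x) : t ∈ ℝ}` is contained in `M`. -/
theorem monge_cayley_salmon
    (M : Set (EuclideanSpace ℝ (Fin 3))) (hMclosed : IsClosed M)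
    (hM : IsAnalyticSubmanifold 2 M)
    (v : EuclideanSpace ℝ (Fin 3) → EuclideanSpace ℝ (Fin 3))
    (hv : ContDiff ℝ (⊤ : ℕ∞) v) (hv0 : ∀ x ∈ M, v x ≠ 0)
    (hcontact : ∀ x ∈ M, HasContactOrderAt 3 (fun t => x + t • v x) M) :
    ∀ x ∈ M, ∀ t : ℝ, x + t • v x ∈ M := by
  exact monge_cayley_salmon_general le_rfl hMclosed hM
    (fun x _ => (contDiff_infty.1 hv 2).contDiffAt) hcontact
end
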